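/- Let 𝕏 = (X,Σ_X,𝔪_X) and 𝕐 = (Y,Σ_Y,𝔪_Y) be separable σ-finite measure spaces, and φ : X → Y a measurable map with φ_#𝔪_X ≪ 𝔪_Y. Let ℳ, 𝒩 be Banach L^0(𝕐)-modules. Then there is a unique homomorphism φ* : ℳ ⊗̂_ε 𝒩 → (φ*ℳ) ⊗̂_ε (φ*𝒩) with φ*(v ⊗ w) = (φ*v) ⊗ (φ*w) for all v ∈ ℳ, w ∈ 𝒩; it satisfies |φ*α|_ε = |α|_ε ∘ φ for every α ∈ ℳ ⊗̂_ε 𝒩, and its image generates (φ*ℳ) ⊗̂_ε (φ*𝒩), so that ((φ*ℳ) ⊗̂_ε (φ*𝒩), φ*) is a realization of the pullback of ℳ ⊗̂_ε 𝒩; in particular φ*(ℳ ⊗̂_ε 𝒩) ≅ (φ*ℳ) ⊗̂_ε (φ*𝒩) as Banach L^0(𝕏)-modules. -/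

import Mathlib

/-!
The heart of the matter is the identity `|φ*α|_ε = |α|_ε ∘ φ` for `α` in the algebraic tensor
product `ℳ ⊗ 𝒩`, where `φ*(v ⊗ w) = φ*v ⊗ φ*w` (`pn_tensorPull`).

For `≥`, every functional `ω` in the dual unit disc of `ℳ` is carried to one in the dual unit disc
of `φ*ℳ` that takes the value `ω(v) ∘ φ` at `φ*v` (`exists_pull_functional`). The functional is
prescribed on the `L⁰(𝕏)`-span of the image of `φ*` and extended by the Hahn–Banach theorem over
`L⁰` (`exists_dominated_extension`). Suprema in `L⁰` are realized by countable subfamilies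
(`exists_isLUB_seq`), so they are compatible with composition with `φ` (`pullL0_le_of_isLUB`).

For `≤`, functionals on `φ*ℳ` need not come from functionals on `ℳ`, but they do up to an
arbitrarily small error on suitable pieces. Fix `v₁, …, vₙ ∈ ℳ`, `δ > 0` and rationals `rᵢ`, and
let `ω̃` be in the dual unit disc of `φ*ℳ`. There is `ω` in the dual unit disc of `ℳ`, depending
only on `vᵢ`, `rᵢ`, `δ`, whose values `ω(vᵢ)` are `δ`-close to `rᵢ` at `φ(x)` for a.e. `x` at which
`ω̃(φ*vᵢ)` is `δ`-close to `rᵢ` for all `i` (`exists_descent_functional`). It is obtained from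
Hahn–Banach on `ℳ × L⁰(𝕐)ⁿ`. Countably many rational vectors cover `X`, and `δ → 0` gives the bound
(`tensorFun_tensorPull_le`).

Given the identity, `φ*` extends to the completions: sequences converging fast enough in distance
converge a.e. in pointwise norm, and the closure of the graph of `φ*` (`LimRel`) is again the graph
of a map which is additive, semilinear and preserves the pointwise norm. Any competitor has its
graph inside the same relation (`limRel_of_hom`), whence uniqueness. The image generates because
elementary tensors are approximated by `L⁰(𝕏)`-combinations of the `φ*v ⊗ φ*w` (`span_dense`).
-/

open MeasureTheory Filter Set TensorProduct

noncomputable section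

namespace Paper

variable {X : Type*} [MeasurableSpace X]

/-- The space `L⁰(𝕏)` of real-valued measurable functions up to `μ`-a.e. equality. -/
abbrev L0 (μ : Measure X) : Type _ := X →ₘ[μ] ℝ

instance (μ : Measure X) : CommRing (L0 μ) :=
  { (inferInstance : AddCommGroup (L0 μ)), (inferInstance : CommMonoid (L0 μ)) with
    left_distrib := fun a b c => AEEqFun.toGerm_injective <| by
      simp only [AEEqFun.mul_toGerm, AEEqFun.add_toGerm, mul_add]
    right_distrib := fun a b c => AEEqFun.toGerm_injective <| by
      simp only [AEEqFun.mul_toGerm, AEEqFun.add_toGerm, add_mul]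
    zero_mul := fun a => AEEqFun.toGerm_injective <| by
      simp only [AEEqFun.mul_toGerm, AEEqFun.zero_toGerm, zero_mul]
    mul_zero := fun a => AEEqFun.toGerm_injective <| by
      simp only [AEEqFun.mul_toGerm, AEEqFun.zero_toGerm, mul_zero] }

/-- The distance on `L⁰(𝕏)` inducing the topology of convergence in measure, defined through
the auxiliary finite measure `μ.toFinite` (which satisfies `μ ≪ μ.toFinite ≪ μ`). -/
noncomputable def dL0 (μ : Measure X) [SFinite μ] (f g : L0 μ) : ℝ :=
  ∫ x, min |f x - g x| 1 ∂(μ.toFinite)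

/-- A Banach `L⁰(𝕏)`-module: a module over `L⁰(𝕏)` endowed with a pointwise norm, complete
with respect to the induced distance. -/
class BanachMod (μ : Measure X) [SFinite μ] (M : Type*) [AddCommGroup M]
    [Module (L0 μ) M] where
  pn : M → L0 μ
  pn_nonneg : ∀ v : M, 0 ≤ pn v
  pn_eq_zero : ∀ v : M, pn v = 0 ↔ v = 0
  pn_add_le : ∀ v w : M, pn (v + w) ≤ pn v + pn w
  pn_smul : ∀ (f : L0 μ) (v : M), pn (f • v) = |f| * pn v
  complete : ∀ u : ℕ → M,
    (∀ ε : ℝ, 0 < ε → ∃ N : ℕ, ∀ m ≥ N, ∀ n ≥ N, dL0 μ (pn (u m - u n)) 0 < ε) →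
    ∃ v : M, Tendsto (fun n => dL0 μ (pn (u n - v)) 0) atTop (nhds 0)

/-- The pointwise norm of a Banach `L⁰(𝕏)`-module, with the measure explicit. -/
noncomputable def pn (μ : Measure X) [SFinite μ] {M : Type*} [AddCommGroup M]
    [Module (L0 μ) M] [BanachMod μ M] (v : M) : L0 μ :=
  BanachMod.pn v

/-- The distance on a Banach `L⁰(𝕏)`-module. -/
noncomputable def dM (μ : Measure X) [SFinite μ] {M : Type*} [AddCommGroup M]
    [Module (L0 μ) M] [BanachMod μ M] (v w : M) : ℝ :=
  dL0 μ (pn μ (v - w)) 0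

section Defs

variable (μ : Measure X) [SFinite μ]
variable {M N : Type*} [AddCommGroup M] [Module (L0 μ) M] [BanachMod μ M]
  [AddCommGroup N] [Module (L0 μ) N] [BanachMod μ N]

/-- The set of admissible bounds of a map between Banach `L⁰(𝕏)`-modules; the pointwise norm
`|T|` of a homomorphism is the infimum of this set. -/
def homBddSet (T : M → N) : Set (L0 μ) :=
  {g | 0 ≤ g ∧ ∀ v, pn μ (T v) ≤ g * pn μ v}

/-- A homomorphism of Banach `L⁰(𝕏)`-modules: an `L⁰(𝕏)`-linear map admitting a bound
`g ∈ L⁰(𝕏)⁺` with `|T v| ≤ g |v|` (equivalently, `L⁰(𝕏)`-linear and continuous). -/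
def IsHom (T : M →ₗ[L0 μ] N) : Prop :=
  ∃ g, g ∈ homBddSet μ (⇑T)

/-- The set of admissible bounds of an `L⁰(𝕏)`-valued map (for elements of the dual module). -/
def dualBddSet (ω : M → L0 μ) : Set (L0 μ) :=
  {g | 0 ≤ g ∧ ∀ v, |ω v| ≤ g * pn μ v}

/-- Membership in the dual module `ℳ*`: an `L⁰(𝕏)`-linear map `ω : ℳ → L⁰(𝕏)` admitting a
bound `g ∈ L⁰(𝕏)⁺` with `|ω v| ≤ g |v|`. -/
def IsDual (ω : M →ₗ[L0 μ] L0 μ) : Prop :=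
  ∃ g, g ∈ dualBddSet μ (⇑ω)

/-- Membership in the unit disc `𝔻_{ℳ*}` of the dual module: `|ω| ≤ 1`, equivalently
`|ω v| ≤ |v|` for every `v`. -/
def InDualDisc (ω : M →ₗ[L0 μ] L0 μ) : Prop :=
  ∀ v, |ω v| ≤ pn μ v

/-- The family of pointwise norms `|s - ∑_{i ∈ F ∪ G} v i|` for `G` finite disjoint from `F`,
whose `F`-indexed inf-sup being `0` defines `s = ∑_{i∈I} v i`. -/
def sumUB {I : Type*} (v : I → M) (s : M) (F : Finset I) : Set (L0 μ) :=
  {g | ∃ G : Finset I, Disjoint G F ∧ g = pn μ (s - (∑ i ∈ F, v i + ∑ i ∈ G, v i))}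

/-- `HasSumMod μ v s` means that the family `{v_i}` is summable in the Banach `L⁰(𝕏)`-module
with sum `s`, i.e. `⋀_F ⋁_G |s - ∑_{i ∈ F ∪ G} v_i| = 0` (the inner suprema being the values
of `b`, and the outer infimum being `0`). -/
def HasSumMod {I : Type*} (v : I → M) (s : M) : Prop :=
  ∃ b : Finset I → L0 μ, (∀ F, IsLUB (sumUB μ v s F) (b F)) ∧ IsGLB (Set.range b) 0

/-- A family in a Banach `L⁰(𝕏)`-module is summable if it has a sum. -/
def SummableMod {I : Type*} (v : I → M) : Prop :=
  ∃ s, HasSumMod μ v s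

/-- The partial sums `∑_{i ∈ F} |v i|` of the pointwise norms of a family; the element `|v|₁`
of `ℓ₁(I, ℳ)` is the supremum of this set. -/
def l1PartialSums {I : Type*} (v : I → M) : Set (L0 μ) :=
  {g | ∃ F : Finset I, g = ∑ i ∈ F, pn μ (v i)}

/-- Membership in `ℓ₁(I, ℳ)`: the partial sums of the pointwise norms admit a supremum
(equivalently, an upper bound) in `L⁰(𝕏)`. -/
def Meml1 {I : Type*} (v : I → M) : Prop :=
  ∃ b, IsLUB (l1PartialSums μ v) b

/-- The partial sums `∑_{i ∈ F} |v i|` for an `L⁰(𝕏)`-valued family. -/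
def l1PartialSumsF {I : Type*} (v : I → L0 μ) : Set (L0 μ) :=
  {g | ∃ F : Finset I, g = ∑ i ∈ F, |v i|}

/-- Membership in `ℓ₁(I, L⁰(𝕏))`. -/
def Meml1F {I : Type*} (v : I → L0 μ) : Prop :=
  ∃ b, IsLUB (l1PartialSumsF μ v) b

/-- The set whose infimum defines the projective pointwise norm: all values
`∑_{i=1}^n |v_i||w_i|` over representations `α = ∑_{i=1}^n v_i ⊗ w_i`. -/
def piReps (α : M ⊗[L0 μ] N) : Set (L0 μ) :=
  {g | ∃ (n : ℕ) (v : Fin n → M) (w : Fin n → N),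
    α = ∑ i, v i ⊗ₜ[L0 μ] w i ∧ g = ∑ i, pn μ (v i) * pn μ (w i)}

/-- The set whose supremum defines the injective pointwise norm: all values
`|∑_{i=1}^n ω(v_i) η(w_i)|` over representations `α = ∑_{i=1}^n v_i ⊗ w_i` and elements
`ω ∈ 𝔻_{ℳ*}`, `η ∈ 𝔻_{𝒩*}`. -/
def epsReps (α : M ⊗[L0 μ] N) : Set (L0 μ) :=
  {g | ∃ (n : ℕ) (v : Fin n → M) (w : Fin n → N)
    (ω : M →ₗ[L0 μ] L0 μ) (η : N →ₗ[L0 μ] L0 μ), InDualDisc μ ω ∧ InDualDisc μ η ∧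
    α = ∑ i, v i ⊗ₜ[L0 μ] w i ∧ g = |∑ i, ω (v i) * η (w i)|}

/-- `IsPiTensor μ M N P e` states that the Banach `L⁰(𝕏)`-module `P`, together with the
`L⁰(𝕏)`-linear map `e` defined on the algebraic tensor product, realizes the projective
tensor product `ℳ ⊗̂_π 𝒩`: the pointwise norm of `e α` is the projective pointwise norm
`|α|_π` and the image of `e` is dense. -/
structure IsPiTensor (M N P : Type*) [AddCommGroup M] [Module (L0 μ) M] [BanachMod μ M]
    [AddCommGroup N] [Module (L0 μ) N] [BanachMod μ N]
    [AddCommGroup P] [Module (L0 μ) P] [BanachMod μ P]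
    (e : M ⊗[L0 μ] N →ₗ[L0 μ] P) : Prop where
  pn_emb : ∀ α : M ⊗[L0 μ] N, IsGLB (piReps μ α) (pn μ (e α))
  dense : ∀ p : P, ∀ ε : ℝ, 0 < ε → ∃ α : M ⊗[L0 μ] N, dM μ (e α) p < ε

/-- `IsEpsTensor μ M N P e` states that the Banach `L⁰(𝕏)`-module `P`, together with the
`L⁰(𝕏)`-linear map `e` defined on the algebraic tensor product, realizes the injective
tensor product `ℳ ⊗̂_ε 𝒩`: the pointwise norm of `e α` is the injective pointwise norm
`|α|_ε` and the image of `e` is dense. -/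
structure IsEpsTensor (M N P : Type*) [AddCommGroup M] [Module (L0 μ) M] [BanachMod μ M]
    [AddCommGroup N] [Module (L0 μ) N] [BanachMod μ N]
    [AddCommGroup P] [Module (L0 μ) P] [BanachMod μ P]
    (e : M ⊗[L0 μ] N →ₗ[L0 μ] P) : Prop where
  pn_emb : ∀ α : M ⊗[L0 μ] N, IsLUB (epsReps μ α) (pn μ (e α))
  dense : ∀ p : P, ∀ ε : ℝ, 0 < ε → ∃ α : M ⊗[L0 μ] N, dM μ (e α) p < ε

end Defs

/-- A σ-finite measure space is separable: there is a sequence of measurable sets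
approximating every finite-measure set in measure. -/
def MeasSeparable {Y : Type*} [MeasurableSpace Y] (ν : Measure Y) : Prop :=
  ∃ E : ℕ → Set Y, (∀ n, MeasurableSet (E n)) ∧
    ∀ F : Set Y, MeasurableSet F → ν F < ⊤ →
      ∀ ε : ENNReal, 0 < ε → ∃ n, ν (symmDiff (E n) F) < ε

/-- Composition with `φ`, as a map `L⁰(𝕐) → L⁰(𝕏)` (for `φ` with `φ_# μ ≪ ν`). -/
def pullL0 {Y : Type*} [MeasurableSpace Y] {μ : Measure X} {ν : Measure Y} {φ : X → Y}
    (hφ : Measure.QuasiMeasurePreserving φ μ ν) (f : L0 ν) : L0 μ :=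
  f.compQuasiMeasurePreserving φ hφ

/-- `(Mp, pb)` is a realization of the pullback `φ*ℳ` of the Banach `L⁰(𝕐)`-module `ℳ`:
`pb` is linear, `pb (f • v) = (f ∘ φ) • pb v`, `|pb v| = |v| ∘ φ`, and the `L⁰(𝕏)`-module
generated by the image of `pb` is dense in `Mp`. -/
structure IsPullback {Y : Type*} [MeasurableSpace Y] (μ : Measure X) [SFinite μ]
    (ν : Measure Y) [SFinite ν] (φ : X → Y) (hφ : Measure.QuasiMeasurePreserving φ μ ν)
    (M : Type*) [AddCommGroup M] [Module (L0 ν) M] [BanachMod ν M]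
    (Mp : Type*) [AddCommGroup Mp] [Module (L0 μ) Mp] [BanachMod μ Mp]
    (pb : M → Mp) : Prop where
  add : ∀ v w : M, pb (v + w) = pb v + pb w
  smul : ∀ (f : L0 ν) (v : M), pb (f • v) = pullL0 hφ f • pb v
  pnorm : ∀ v : M, pn μ (pb v) = pullL0 hφ (pn ν v)
  dense : ∀ u : Mp, ∀ ε : ℝ, 0 < ε →
    ∃ w ∈ Submodule.span (L0 μ) (Set.range pb), dM μ w u < ε

/-! ### Essential suprema in `L⁰` -/

/-- Dedekind completeness of `L⁰`, together with the fact that a supremum is realized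
pointwise a.e. by a countable subfamily. -/
theorem exists_isLUB_seq (μ : Measure X) [SFinite μ] {S : Set (L0 μ)} (hne : S.Nonempty)
    (hb : BddAbove S) :
    ∃ s, IsLUB S s ∧ ∃ u : ℕ → L0 μ, (∀ n, u n ∈ S) ∧
      ∀ᵐ x ∂μ, ∀ t : ℝ, (∀ n, u n x ≤ t) → s x ≤ t := by
  have hC (q : ℚ) : ∀ s ∈ (fun f : L0 μ => {x | (q : ℝ) < f x}) '' S, MeasurableSet s := by
    rintro _ ⟨f, -, rfl⟩
    exact measurableSet_lt measurable_const f.measurable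
  choose D hDC hDc hD using fun q => Measure.exists_ae_subset_biUnion_countable μ (hC q)
  have hg (q : ℚ) (d : Set X) (hd : d ∈ D q) : ∃ f ∈ S, {x | (q : ℝ) < f x} = d := hDC q hd
  choose! g hgS hgd using hg
  obtain ⟨f₀, hf₀⟩ := hne
  obtain ⟨h, hh⟩ := hb
  let J : Set (L0 μ) := {f₀} ∪ ⋃ q, g q '' D q
  have hJc : J.Countable :=
    (Set.countable_singleton _).union (Set.countable_iUnion fun q => (hDc q).image _)
  obtain ⟨u, hu⟩ := hJc.exists_eq_range ⟨f₀, Or.inl rfl⟩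
  have hJS : J ⊆ S := by
    rintro f (rfl | hf)
    · exact hf₀
    · obtain ⟨q, d, hd, rfl⟩ := Set.mem_iUnion.1 hf
      exact hgS q d hd
  have huS (n : ℕ) : u n ∈ S := hJS (hu ▸ Set.mem_range_self n)
  have hbd : ∀ᵐ x ∂μ, ∀ n, u n x ≤ h x :=
    ae_all_iff.2 fun n => AEEqFun.coeFn_le.2 (hh (huS n))
  have hm : Measurable fun x => ⨆ n, u n x := Measurable.iSup fun n => (u n).measurable
  let s : L0 μ := AEEqFun.mk _ hm.aestronglyMeasurable
  have hs : ∀ᵐ x ∂μ, s x = ⨆ n, u n x := AEEqFun.coeFn_mk _ _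
  refine ⟨s, ⟨fun f hf => ?_, fun k hk => ?_⟩, u, huS, ?_⟩
  · rw [← AEEqFun.coeFn_le]
    have h1 : ∀ᵐ x ∂μ, ∀ q : ℚ, x ∈ {x | (q : ℝ) < f x} → x ∈ ⋃₀ D q :=
      ae_all_iff.2 fun q => hD q _ ⟨f, hf, rfl⟩
    filter_upwards [h1, hs, hbd] with x hx hsx hbx
    refine le_of_forall_rat_lt_imp_le fun q hq => ?_
    obtain ⟨d, hd, hxd⟩ := hx q hq
    rw [← hgd q d hd] at hxd
    have : g q d ∈ Set.range u := hu ▸ Or.inr (Set.mem_iUnion.2 ⟨q, d, hd, rfl⟩)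
    obtain ⟨n, hn⟩ := this
    rw [hsx]
    have h2 : u n x ≤ ⨆ n, u n x := le_ciSup (f := fun n => u n x)
      ⟨h x, by rintro _ ⟨n, rfl⟩; exact hbx n⟩ n
    rw [hn] at h2
    exact (le_of_lt hxd).trans h2
  · rw [← AEEqFun.coeFn_le]
    have h1 : ∀ᵐ x ∂μ, ∀ n, u n x ≤ k x :=
      ae_all_iff.2 fun n => AEEqFun.coeFn_le.2 (hk (huS n))
    filter_upwards [h1, hs] with x hx hsx
    rw [hsx]
    exact ciSup_le hx
  · filter_upwards [hs] with x hsx t ht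
    rw [hsx]
    exact ciSup_le ht

theorem abs_one_L0 (μ : Measure X) : |(1 : L0 μ)| = 1 := by
  apply AEEqFun.ext
  filter_upwards [AEEqFun.coeFn_abs (1 : L0 μ),
    AEEqFun.coeFn_one (α := X) (μ := μ) (β := ℝ)] with x h1 h2
  simp [h1, h2]

theorem abs_zero_L0 (μ : Measure X) : |(0 : L0 μ)| = 0 := by
  apply AEEqFun.ext
  filter_upwards [AEEqFun.coeFn_abs (0 : L0 μ),
    AEEqFun.coeFn_zero (α := X) (μ := μ) (β := ℝ)] with x h1 h2
  simp [h1, h2]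

/-! ### Hahn–Banach extension over `L⁰` -/

/-- One step of the extension: a submodule of `V × L⁰` lying below the graph of `p` can be
enlarged so that its projection to `V` contains a prescribed vector `v`. -/
theorem exists_extension_step (μ : Measure X) [SFinite μ] {V : Type*} [AddCommGroup V]
    [Module (L0 μ) V] (p : V → L0 μ) (hadd : ∀ v w, p (v + w) ≤ p v + p w)
    (hsmul : ∀ (f : L0 μ) v, p (f • v) = |f| * p v)
    (G : Submodule (L0 μ) (V × L0 μ)) (hG : ∀ z ∈ G, z.2 ≤ p z.1) (v : V) :
    ∃ c : L0 μ, ∀ z ∈ G ⊔ Submodule.span (L0 μ) {(v, c)}, z.2 ≤ p z.1 := by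
  have hneg (w : V) : p (-w) = p w := by
    rw [← neg_one_smul (L0 μ) w, hsmul, abs_neg, abs_one_L0, one_mul]
  let S : Set (L0 μ) := (fun z : V × L0 μ => z.2 - p (z.1 - v)) '' (G : Set (V × L0 μ))
  have hne : S.Nonempty := ⟨_, 0, G.zero_mem, rfl⟩
  have hub : ∀ z ∈ G, p (z.1 + v) - z.2 ∈ upperBounds S := by
    rintro z hz _ ⟨z', hz', rfl⟩
    have h1 := hG _ (G.add_mem hz hz')
    have h2 := hadd (z.1 + v) (z'.1 - v)
    rw [show z.1 + v + (z'.1 - v) = (z + z').1 by simp] at h2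
    have h3 := h1.trans h2
    rw [← AEEqFun.coeFn_le] at h3 ⊢
    filter_upwards [h3, AEEqFun.coeFn_sub (p (z.1 + v)) z.2,
      AEEqFun.coeFn_sub z'.2 (p (z'.1 - v)), AEEqFun.coeFn_add z.2 z'.2,
      AEEqFun.coeFn_add (p (z.1 + v)) (p (z'.1 - v))] with x h3 h4 h5 h6 h7
    simp only [Prod.snd_add, h4, h5, h6, h7, Pi.add_apply, Pi.sub_apply] at h3 ⊢
    linarith
  obtain ⟨c, hc, -⟩ := exists_isLUB_seq μ hne ⟨_, hub 0 G.zero_mem⟩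
  refine ⟨c, fun z' hz' => ?_⟩
  obtain ⟨z, hz, y, hy, rfl⟩ := Submodule.mem_sup.1 hz'
  obtain ⟨a, rfl⟩ := Submodule.mem_span_singleton.1 hy
  -- `b` is the pointwise inverse of `a`, with value `0` where `a` vanishes
  let b : L0 μ := AEEqFun.compMeasurable (fun t : ℝ => t⁻¹) measurable_inv a
  have hb : ∀ᵐ x ∂μ, b x = (a x)⁻¹ := AEEqFun.coeFn_compMeasurable _ _ _
  have haba : a * b * a = a := by
    apply AEEqFun.ext
    filter_upwards [AEEqFun.coeFn_mul (a * b) a, AEEqFun.coeFn_mul a b, hb] with x h1 h2 h3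
    rw [h1, Pi.mul_apply, h2, Pi.mul_apply, h3]
    by_cases h : a x = 0 <;> simp [h]
  have h1 : c ≤ p (b • z.1 + v) - b * z.2 := hc.2 (hub _ (G.smul_mem b hz))
  have h2 : -b * z.2 - p (b • z.1 + v) ≤ c := by
    have : -b * z.2 - p (-b • z.1 - v) ≤ c := hc.1 ⟨_, G.smul_mem (-b) hz, rfl⟩
    have e : p (-b • z.1 - v) = p (b • z.1 + v) := by
      rw [← hneg]; congr 1; module
    rwa [e] at this
  have h3 : |a| * p (b • z.1 + v) = |a * b| * p (z.1 + a • v) := by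
    rw [← hsmul, ← hsmul]; congr 1
    simp only [smul_add, smul_smul, haba]
  have h4 : |1 - a * b| * p (z.1 + a • v) = |1 - a * b| * p z.1 := by
    rw [← hsmul, ← hsmul]; congr 1
    rw [smul_add, smul_smul, sub_mul, haba]; simp
  have h5 := hG z hz
  change z.2 + a * c ≤ p (z.1 + a • v)
  rw [← AEEqFun.coeFn_le] at h1 h2 h5 ⊢
  generalize p (z.1 + a • v) = P at *
  generalize p (b • z.1 + v) = P' at *
  generalize p z.1 = P'' at *
  generalize z.2 = w at *
  have e3 : ∀ᵐ x ∂μ, |a x| * P' x = |a x * b x| * P x := by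
    have : ∀ᵐ x ∂μ, (|a| * P') x = (|a * b| * P) x := by rw [h3]; simp
    filter_upwards [this, AEEqFun.coeFn_mul |a| P', AEEqFun.coeFn_mul |a * b| P,
      AEEqFun.coeFn_abs a, AEEqFun.coeFn_abs (a * b), AEEqFun.coeFn_mul a b] with x g1 g2 g3 g4 g5 g6
    rwa [g2, g3, Pi.mul_apply, Pi.mul_apply, g4, g5, g6] at g1
  have e4 : ∀ᵐ x ∂μ, |1 - a x * b x| * P x = |1 - a x * b x| * P'' x := by
    have : ∀ᵐ x ∂μ, (|1 - a * b| * P) x = (|1 - a * b| * P'') x := by rw [h4]; simp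
    filter_upwards [this, AEEqFun.coeFn_mul |1 - a * b| P, AEEqFun.coeFn_mul |1 - a * b| P'',
      AEEqFun.coeFn_abs (1 - a * b), AEEqFun.coeFn_sub 1 (a * b), AEEqFun.coeFn_mul a b,
      AEEqFun.coeFn_one (α := X) (μ := μ) (β := ℝ)] with x g1 g2 g3 g4 g5 g6 g7
    rwa [g2, g3, Pi.mul_apply, Pi.mul_apply, g4, g5, Pi.sub_apply, g6, g7] at g1
  filter_upwards [h1, h2, h5, hb, e3, e4, AEEqFun.coeFn_sub P' (b * w), AEEqFun.coeFn_mul b w,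
    AEEqFun.coeFn_sub (-b * w) P', AEEqFun.coeFn_mul (-b) w, AEEqFun.coeFn_neg b,
    AEEqFun.coeFn_add w (a * c), AEEqFun.coeFn_mul a c] with
    x h1 h2 h5 hb e3 e4 f1 f2 f3 f4 f5 f6 f7
  simp only [f1, f2, f3, f4, f5, f6, f7, Pi.add_apply, Pi.mul_apply, Pi.sub_apply, Pi.neg_apply]
    at h1 h2 ⊢
  rw [hb] at h1 h2 e3 e4
  by_cases h : a x = 0
  · simp only [h, zero_mul, sub_zero, abs_one, one_mul, add_zero] at e4 ⊢
    linarith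
  · rw [mul_inv_cancel₀ h, abs_one, one_mul] at e3
    have k : a x * ((a x)⁻¹ * w x) = w x := by field_simp
    rcases lt_or_gt_of_ne h with h | h
    · rw [abs_of_neg h] at e3
      have := mul_le_mul_of_nonpos_left h2 h.le
      linarith
    · rw [abs_of_pos h] at e3
      have := mul_le_mul_of_nonneg_left h1 h.le
      linarith

/-- Hahn–Banach theorem for modules over `L⁰`: partially defined functionals are encoded by
their graphs `G₀ ⊆ V × L⁰`, and domination by the sublinear `p` makes such a graph
single-valued automatically. -/
theorem exists_dominated_extension (μ : Measure X) [SFinite μ] {V : Type*} [AddCommGroup V]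
    [Module (L0 μ) V] (p : V → L0 μ) (hadd : ∀ v w, p (v + w) ≤ p v + p w)
    (hsmul : ∀ (f : L0 μ) v, p (f • v) = |f| * p v)
    (G₀ : Submodule (L0 μ) (V × L0 μ)) (hG₀ : ∀ z ∈ G₀, z.2 ≤ p z.1) :
    ∃ F : V →ₗ[L0 μ] L0 μ, (∀ v, |F v| ≤ p v) ∧ ∀ z ∈ G₀, F z.1 = z.2 := by
  obtain ⟨G, hG₀G, hmax⟩ := zorn_le_nonempty₀
    {G : Submodule (L0 μ) (V × L0 μ) | ∀ z ∈ G, z.2 ≤ p z.1}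
    (fun c hc hchain y hy => ⟨sSup c, fun z hz => by
      obtain ⟨G, hGc, hzG⟩ := (Submodule.mem_sSup_of_directed ⟨y, hy⟩ hchain.directedOn).1 hz
      exact hc hGc z hzG, fun G hG => le_sSup hG⟩) G₀ hG₀
  have hG : ∀ z ∈ G, z.2 ≤ p z.1 := hmax.prop
  have hp0 : p 0 = 0 := by
    have := hsmul 0 0
    simpa [abs_zero_L0] using this
  have hneg (w : V) : p (-w) = p w := by
    rw [← neg_one_smul (L0 μ) w, hsmul, abs_neg, abs_one_L0, one_mul]
  have htot (v : V) : ∃ c, (v, c) ∈ G := by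
    obtain ⟨c, hc⟩ := exists_extension_step μ p hadd hsmul G hG v
    exact ⟨c, hmax.le_of_ge hc le_sup_left
      ((le_sup_right : _ ≤ G ⊔ _) (Submodule.mem_span_singleton_self _))⟩
  have huniq0 (c : L0 μ) (h : ((0 : V), c) ∈ G) : c = 0 := by
    have h1 : c ≤ 0 := by simpa [hp0] using hG _ h
    have h2 : -c ≤ 0 := by simpa [hp0] using hG _ (G.neg_mem h)
    apply le_antisymm h1
    rw [← AEEqFun.coeFn_le] at h2 ⊢
    filter_upwards [h2, AEEqFun.coeFn_neg c, AEEqFun.coeFn_zero (α := X) (μ := μ) (β := ℝ)]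
      with x h3 h4 h5
    simp only [h4, h5, Pi.neg_apply, Pi.zero_apply] at h3 ⊢
    linarith
  have huniq {v : V} {c d : L0 μ} (hc : (v, c) ∈ G) (hd : (v, d) ∈ G) : c = d := by
    have := G.sub_mem hc hd
    rw [Prod.mk_sub_mk, sub_self] at this
    exact sub_eq_zero.1 (huniq0 _ this)
  choose F hF using htot
  refine ⟨⟨⟨F, fun v w => huniq (hF _) (G.add_mem (hF v) (hF w))⟩,
    fun a v => huniq (hF _) (G.smul_mem a (hF v))⟩, fun v => ?_, fun z hz => ?_⟩
  · exact sup_le (hG _ (hF v)) (hneg v ▸ hG _ (G.neg_mem (hF v)))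
  · exact huniq (hF _) (hG₀G hz)

/-! ### Pointwise a.e. calculus -/

theorem abs_le_ae (μ : Measure X) {f g : L0 μ} (h : |f| ≤ g) : ∀ᵐ x ∂μ, |f x| ≤ g x := by
  filter_upwards [AEEqFun.coeFn_le.2 h, AEEqFun.coeFn_abs f] with x h1 h2
  rwa [h2] at h1

theorem abs_le_of_ae (μ : Measure X) {f g : L0 μ} (h : ∀ᵐ x ∂μ, |f x| ≤ g x) : |f| ≤ g := by
  rw [← AEEqFun.coeFn_le]
  filter_upwards [h, AEEqFun.coeFn_abs f] with x h1 h2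
  rwa [h2]

theorem sum_mul_ae (μ : Measure X) {ι : Type*} (s : Finset ι) (f g : ι → L0 μ) :
    ∀ᵐ x ∂μ, (∑ i ∈ s, f i * g i) x = ∑ i ∈ s, f i x * g i x := by
  have h : ∀ i ∈ s, ∀ᵐ x ∂μ, (f i * g i) x = f i x * g i x :=
    fun i _ => AEEqFun.coeFn_mul _ _
  filter_upwards [AEEqFun.coeFn_fun_finsetSum s fun i => f i * g i,
    (ae_ball_iff s.countable_toSet).2 h] with x h1 h2
  rw [h1]
  exact Finset.sum_congr rfl h2

section Pointwise

variable (μ : Measure X) [SFinite μ] {M : Type*} [AddCommGroup M] [Module (L0 μ) M]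
  [BanachMod μ M]

theorem pn_nonneg_ae (v : M) : ∀ᵐ x ∂μ, 0 ≤ pn μ v x := by
  filter_upwards [AEEqFun.coeFn_le.2 (BanachMod.pn_nonneg (μ := μ) v),
    AEEqFun.coeFn_zero (α := X) (μ := μ) (β := ℝ)] with x h1 h2
  rwa [h2] at h1

theorem pn_add_ae (v w : M) : ∀ᵐ x ∂μ, pn μ (v + w) x ≤ pn μ v x + pn μ w x := by
  filter_upwards [AEEqFun.coeFn_le.2 (BanachMod.pn_add_le (μ := μ) v w),
    AEEqFun.coeFn_add (BanachMod.pn v : L0 μ) (BanachMod.pn w)] with x h1 h2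
  rwa [h2] at h1

theorem pn_smul_ae (f : L0 μ) (v : M) : ∀ᵐ x ∂μ, pn μ (f • v) x = |f x| * pn μ v x := by
  have h : pn μ (f • v) = |f| * pn μ v := BanachMod.pn_smul f v
  rw [h]
  filter_upwards [AEEqFun.coeFn_mul |f| (pn μ v), AEEqFun.coeFn_abs f] with x h1 h2
  rw [h1, Pi.mul_apply, h2]

theorem pn_zero : pn μ (0 : M) = 0 := (BanachMod.pn_eq_zero (μ := μ) (0 : M)).2 rfl

theorem pn_neg (v : M) : pn μ (-v) = pn μ v := by
  rw [← neg_one_smul (L0 μ) v]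
  refine (BanachMod.pn_smul (μ := μ) (-1) v).trans ?_
  rw [abs_neg, abs_one_L0, one_mul]; rfl

theorem pn_sub_comm (v w : M) : pn μ (v - w) = pn μ (w - v) := by
  rw [← pn_neg, neg_sub]

theorem pn_sub_le_ae (u v w : M) :
    ∀ᵐ x ∂μ, pn μ (u - w) x ≤ pn μ (u - v) x + pn μ (v - w) x := by
  have := pn_add_ae μ (u - v) (v - w)
  rwa [sub_add_sub_cancel] at this

theorem pn_sum_ae {ι : Type*} (s : Finset ι) (v : ι → M) :
    ∀ᵐ x ∂μ, pn μ (∑ i ∈ s, v i) x ≤ ∑ i ∈ s, pn μ (v i) x := by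
  classical
  induction s using Finset.induction with
  | empty =>
    simp only [Finset.sum_empty, pn_zero]
    filter_upwards [AEEqFun.coeFn_zero (α := X) (μ := μ) (β := ℝ)] with x h
    simp [h]
  | insert a s ha ih =>
    simp only [Finset.sum_insert ha]
    filter_upwards [ih, pn_add_ae μ (v a) (∑ i ∈ s, v i)] with x h1 h2
    linarith

end Pointwise

section Pull

variable {Y : Type*} [MeasurableSpace Y] {μ : Measure X} {ν : Measure Y} {φ : X → Y}
  (hφ : Measure.QuasiMeasurePreserving φ μ ν)

theorem pullL0_ae (f : L0 ν) : ∀ᵐ x ∂μ, pullL0 hφ f x = f (φ x) :=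
  AEEqFun.coeFn_compQuasiMeasurePreserving f hφ

theorem pullL0_mul (f g : L0 ν) : pullL0 hφ (f * g) = pullL0 hφ f * pullL0 hφ g := by
  apply AEEqFun.ext
  filter_upwards [pullL0_ae hφ (f * g), pullL0_ae hφ f, pullL0_ae hφ g,
    AEEqFun.coeFn_mul (pullL0 hφ f) (pullL0 hφ g), hφ.ae (AEEqFun.coeFn_mul f g)]
    with x h1 h2 h3 h4 h5
  rw [h1, h4, Pi.mul_apply, h2, h3, h5, Pi.mul_apply]

theorem pullL0_add (f g : L0 ν) : pullL0 hφ (f + g) = pullL0 hφ f + pullL0 hφ g := by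
  apply AEEqFun.ext
  filter_upwards [pullL0_ae hφ (f + g), pullL0_ae hφ f, pullL0_ae hφ g,
    AEEqFun.coeFn_add (pullL0 hφ f) (pullL0 hφ g), hφ.ae (AEEqFun.coeFn_add f g)]
    with x h1 h2 h3 h4 h5
  rw [h1, h4, Pi.add_apply, h2, h3, h5, Pi.add_apply]

theorem pullL0_zero : pullL0 hφ (0 : L0 ν) = 0 := by
  have := pullL0_add hφ (0 : L0 ν) 0
  simpa using this

theorem pullL0_abs (f : L0 ν) : pullL0 hφ |f| = |pullL0 hφ f| := by
  apply AEEqFun.ext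
  filter_upwards [pullL0_ae hφ |f|, pullL0_ae hφ f, AEEqFun.coeFn_abs (pullL0 hφ f),
    hφ.ae (AEEqFun.coeFn_abs f)] with x h1 h2 h3 h4
  rw [h1, h3, h2, h4]

/-- Precomposition with `φ` commutes with suprema, because these are realized by countable
subfamilies. -/
theorem pullL0_le_of_isLUB [SFinite ν] {S : Set (L0 ν)} {s : L0 ν} (hs : IsLUB S s)
    (hne : S.Nonempty) {h : L0 μ} (hh : ∀ g ∈ S, pullL0 hφ g ≤ h) : pullL0 hφ s ≤ h := by
  obtain ⟨s', hs', u, huS, hu⟩ := exists_isLUB_seq ν hne ⟨s, hs.1⟩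
  obtain rfl := hs.unique hs'
  rw [← AEEqFun.coeFn_le]
  filter_upwards [pullL0_ae hφ s, hφ.ae hu, ae_all_iff.2 fun n => pullL0_ae hφ (u n),
    ae_all_iff.2 fun n => AEEqFun.coeFn_le.2 (hh _ (huS n))] with x h1 h2 h3 h4
  rw [h1]
  exact h2 _ fun n => h3 n ▸ h4 n

end Pull

/-! ### Transfer of functionals along `φ` -/

theorem nonpos_of_le_sum_abs_sub_rat {n : ℕ} (t c : Fin n → ℝ) (A : ℝ)
    (h : ∀ r : Fin n → ℚ, A ≤ ∑ i, |t i - r i| * c i) : A ≤ 0 := by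
  have hd : DenseRange (Pi.map fun (_ : Fin n) (q : ℚ) => (q : ℝ)) :=
    DenseRange.piMap fun _ => Rat.denseRange_cast
  have hcl : IsClosed {s : Fin n → ℝ | A ≤ ∑ i, |t i - s i| * c i} :=
    isClosed_le continuous_const (by fun_prop)
  have := hd.induction_on (p := fun s : Fin n → ℝ => A ≤ ∑ i, |t i - s i| * c i) t hcl h
  simpa using this

section Transfer

variable {Y : Type*} [MeasurableSpace Y] {μ : Measure X} [SFinite μ] {ν : Measure Y} [SFinite ν]
  {φ : X → Y} {hφ : Measure.QuasiMeasurePreserving φ μ ν}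
  {M : Type*} [AddCommGroup M] [Module (L0 ν) M] [BanachMod ν M]
  {Mp : Type*} [AddCommGroup Mp] [Module (L0 μ) Mp] [BanachMod μ Mp]
  {pb : M → Mp}

/-- The map `v ↦ φ*v` as an additive homomorphism. -/
def IsPullback.toAddHom (hpb : IsPullback μ ν φ hφ M Mp pb) : M →+ Mp :=
  AddMonoidHom.mk' pb hpb.add

theorem IsPullback.map_sum (hpb : IsPullback μ ν φ hφ M Mp pb) {ι : Type*} (s : Finset ι)
    (v : ι → M) : pb (∑ i ∈ s, v i) = ∑ i ∈ s, pb (v i) :=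
  _root_.map_sum hpb.toAddHom v s

theorem IsPullback.pnorm_ae (hpb : IsPullback μ ν φ hφ M Mp pb) (v : M) :
    ∀ᵐ x ∂μ, pn μ (pb v) x = pn ν v (φ x) := by
  rw [hpb.pnorm]
  exact pullL0_ae hφ _

/-- Every `ω ∈ 𝔻_{ℳ*}` induces `φ*ω ∈ 𝔻_{(φ*ℳ)*}` with `φ*ω (φ*v) = ω v ∘ φ`. The bound on the
`L⁰(𝕏)`-span of the image of `φ*` follows by freezing the coefficients at rational values. -/
theorem exists_pull_functional (hpb : IsPullback μ ν φ hφ M Mp pb) (ω : M →ₗ[L0 ν] L0 ν)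
    (hω : InDualDisc ν ω) :
    ∃ ω' : Mp →ₗ[L0 μ] L0 μ, InDualDisc μ ω' ∧ ∀ v, ω' (pb v) = pullL0 hφ (ω v) := by
  obtain ⟨F, hF1, hF2⟩ := exists_dominated_extension μ (pn μ : Mp → L0 μ)
    BanachMod.pn_add_le BanachMod.pn_smul
    (Submodule.span (L0 μ) (Set.range fun v => (pb v, pullL0 hφ (ω v)))) (by
      intro z hz
      obtain ⟨n, f, g, rfl⟩ := Submodule.mem_span_set'.1 hz
      choose v hv using fun i => (g i).2
      have e : (∑ i, f i • (g i : Mp × L0 μ)) =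
          (∑ i, f i • pb (v i), ∑ i, f i * pullL0 hφ (ω (v i))) := by
        apply Prod.ext <;> simp [← hv, Prod.fst_sum, Prod.snd_sum]
      rw [e, ← AEEqFun.coeFn_le]
      have key : ∀ᵐ x ∂μ, ∀ r : Fin n → ℚ,
          ∑ i, (r i : ℝ) * ω (v i) (φ x) ≤
            pn μ (∑ i, f i • pb (v i)) x + ∑ i, |f i x - r i| * pn ν (v i) (φ x) := by
        refine ae_all_iff.2 fun r => ?_
        let c : Fin n → L0 ν := fun i => AEEqFun.const Y (r i : ℝ)
        have hc : ∀ᵐ y ∂ν, ∀ i, c i y = r i :=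
          ae_all_iff.2 fun i => AEEqFun.coeFn_const _ _
        have h1 : ∀ᵐ y ∂ν, ω (∑ i, c i • v i) y = ∑ i, (r i : ℝ) * ω (v i) y := by
          simp only [_root_.map_sum, map_smul, smul_eq_mul]
          filter_upwards [hc, sum_mul_ae ν Finset.univ c fun i => ω (v i)] with y h1 h2
          simp only [h2, h1]
        have h2 : pb (∑ i, c i • v i) = ∑ i, pullL0 hφ (c i) • pb (v i) := by
          simp only [hpb.map_sum, hpb.smul]
        have h3 : (∑ i, pullL0 hφ (c i) • pb (v i)) - ∑ i, f i • pb (v i) =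
            ∑ i, (pullL0 hφ (c i) - f i) • pb (v i) := by
          simp only [sub_smul, Finset.sum_sub_distrib]
        have h4 := pn_add_ae μ ((∑ i, pullL0 hφ (c i) • pb (v i)) - ∑ i, f i • pb (v i))
          (∑ i, f i • pb (v i))
        rw [sub_add_cancel, h3, ← h2] at h4
        filter_upwards [hφ.ae h1, hφ.ae hc, h4, hpb.pnorm_ae (∑ i, c i • v i),
          hφ.ae (abs_le_ae ν (hω (∑ i, c i • v i))),
          pn_sum_ae μ Finset.univ fun i => (pullL0 hφ (c i) - f i) • pb (v i),
          ae_all_iff.2 fun i => pn_smul_ae μ (pullL0 hφ (c i) - f i) (pb (v i)),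
          ae_all_iff.2 fun i => AEEqFun.coeFn_sub (pullL0 hφ (c i)) (f i),
          ae_all_iff.2 fun i => pullL0_ae hφ (c i),
          ae_all_iff.2 fun i => hpb.pnorm_ae (v i)] with x k1 k2 k3 k4 k5 k6 k7 k8 k9 k10
        have : ∑ i, pn μ ((pullL0 hφ (c i) - f i) • pb (v i)) x =
            ∑ i, |f i x - r i| * pn ν (v i) (φ x) := by
          refine Finset.sum_congr rfl fun i _ => ?_
          rw [k7, k8, Pi.sub_apply, k9, k2, k10, abs_sub_comm]
        have := le_abs_self (ω (∑ i, c i • v i) (φ x))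
        rw [← k1]
        linarith
      filter_upwards [key, sum_mul_ae μ Finset.univ f fun i => pullL0 hφ (ω (v i)),
        ae_all_iff.2 fun i => pullL0_ae hφ (ω (v i)),
        ae_all_iff.2 fun i => hφ.ae (abs_le_ae ν (hω (v i)))] with x k1 k2 k3 k4
      simp only [k2, k3]
      rw [← sub_nonpos]
      refine nonpos_of_le_sum_abs_sub_rat (fun i => f i x) (fun i => 2 * pn ν (v i) (φ x)) _
        fun r => ?_
      have h5 : ∑ i, f i x * ω (v i) (φ x) ≤
          ∑ i, ((r i : ℝ) * ω (v i) (φ x) + |f i x - r i| * pn ν (v i) (φ x)) := by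
        refine Finset.sum_le_sum fun i _ => ?_
        have h6 : (f i x - r i) * ω (v i) (φ x) ≤ |f i x - r i| * pn ν (v i) (φ x) := by
          refine (le_abs_self _).trans ?_
          rw [abs_mul]
          exact mul_le_mul_of_nonneg_left (k4 i) (abs_nonneg _)
        linarith
      rw [Finset.sum_add_distrib] at h5
      have h7 : ∑ i, |f i x - r i| * (2 * pn ν (v i) (φ x)) =
          2 * ∑ i, |f i x - r i| * pn ν (v i) (φ x) := by
        rw [Finset.mul_sum]
        exact Finset.sum_congr rfl fun i _ => by ring
      rw [h7]
      linarith [k1 r])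
  exact ⟨F, hF1, fun v => hF2 _ (Submodule.subset_span ⟨v, rfl⟩)⟩

/-- Descent of functionals, up to an error `δ`, where they are nearly constant. The functional
`a ↦ ∑ rᵢ aᵢ` is dominated by `|∑ aᵢ vᵢ| + δ ∑ |aᵢ|` on a largest set `B ⊆ Y`, which contains
`φ x` whenever some `ω̃ ∈ 𝔻_{(φ*ℳ)*}` takes values `δ`-close to `rᵢ` on `φ*vᵢ` at `x`. Extending it
from the graph of `a ↦ ∑ aᵢ vᵢ` to `ℳ × L⁰(𝕐)ⁿ` and restricting to `ℳ` produces `ω`; this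
replaces a measurable selection. -/
theorem exists_descent_functional (hpb : IsPullback μ ν φ hφ M Mp pb) {n : ℕ} (v : Fin n → M)
    (r : Fin n → ℝ) (δ : ℝ) (hδ : 0 ≤ δ) :
    ∃ ω : M →ₗ[L0 ν] L0 ν, InDualDisc ν ω ∧
      ∀ ω' : Mp →ₗ[L0 μ] L0 μ, InDualDisc μ ω' →
        ∀ᵐ x ∂μ, (∀ i, |ω' (pb (v i)) x - r i| ≤ δ) → ∀ i, |ω (v i) (φ x) - r i| ≤ δ := by
  let p : M × (Fin n → L0 ν) → L0 ν :=
    fun z => pn ν z.1 + AEEqFun.const Y δ * ∑ i, |z.2 i|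
  have hp (z : M × (Fin n → L0 ν)) :
      ∀ᵐ y ∂ν, p z y = pn ν z.1 y + δ * ∑ i, |z.2 i y| := by
    filter_upwards [AEEqFun.coeFn_add (pn ν z.1) (AEEqFun.const Y δ * ∑ i, |z.2 i|),
      AEEqFun.coeFn_mul (AEEqFun.const Y δ) (∑ i, |z.2 i|),
      AEEqFun.coeFn_const (μ := ν) Y δ,
      AEEqFun.coeFn_fun_finsetSum Finset.univ fun i => |z.2 i|,
      ae_all_iff.2 fun i => AEEqFun.coeFn_abs (z.2 i)] with y h1 h2 h3 h4 h5
    simp only [p, h1, h2, h3, h4, h5, Pi.add_apply, Pi.mul_apply, Function.const_apply]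
  have hadd (z w) : p (z + w) ≤ p z + p w := by
    rw [← AEEqFun.coeFn_le]
    filter_upwards [hp z, hp w, hp (z + w), AEEqFun.coeFn_add (p z) (p w),
      pn_add_ae ν z.1 w.1, ae_all_iff.2 fun i => AEEqFun.coeFn_add (z.2 i) (w.2 i)]
      with y h1 h2 h3 h4 h5 h6
    rw [h3, h4, Pi.add_apply, h1, h2]
    have h7 : ∑ i, |(z + w).2 i y| ≤ ∑ i, (|z.2 i y| + |w.2 i y|) := by
      refine Finset.sum_le_sum fun i _ => ?_
      simp only [Prod.snd_add, Pi.add_apply, h6]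
      exact abs_add_le _ _
    rw [Finset.sum_add_distrib] at h7
    have := mul_le_mul_of_nonneg_left h7 hδ
    simp only [Prod.fst_add] at *
    linarith
  have hsmul (f : L0 ν) (z) : p (f • z) = |f| * p z := by
    apply AEEqFun.ext
    filter_upwards [hp z, hp (f • z), AEEqFun.coeFn_mul |f| (p z), AEEqFun.coeFn_abs f,
      pn_smul_ae ν f z.1, ae_all_iff.2 fun i => AEEqFun.coeFn_mul f (z.2 i)]
      with y h1 h2 h3 h4 h5 h6
    rw [h2, h3, Pi.mul_apply, h1, h4, Prod.smul_fst, h5, mul_add, Finset.mul_sum,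
      Finset.mul_sum, Finset.mul_sum]
    congr 1
    refine Finset.sum_congr rfl fun i _ => ?_
    simp only [Prod.smul_snd, Pi.smul_apply, smul_eq_mul, h6, Pi.mul_apply, abs_mul]
    ring
  have hp_nonneg (z) : ∀ᵐ y ∂ν, 0 ≤ p z y := by
    filter_upwards [hp z, pn_nonneg_ae ν z.1] with y h1 h2
    rw [h1]
    have := Finset.sum_nonneg fun i (_ : i ∈ Finset.univ) => abs_nonneg (z.2 i y)
    positivity
  -- the bad sets, where the domination by `p` fails for the coefficients `a`
  let E (a : Fin n → L0 ν) : Set Y := {y | p (∑ i, a i • v i, a) y < ∑ i, r i * a i y}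
  have hEm : ∀ s ∈ Set.range E, MeasurableSet s := by
    rintro _ ⟨a, rfl⟩
    exact measurableSet_lt (AEEqFun.measurable _)
      (Finset.measurable_sum _ fun i _ => (a i).measurable.const_mul _)
  obtain ⟨D, hDE, hDc, hD⟩ := Measure.exists_ae_subset_biUnion_countable ν hEm
  have hDm : MeasurableSet (⋃₀ D) := MeasurableSet.sUnion hDc fun s hs => hEm s (hDE hs)
  let ind : L0 ν := AEEqFun.mk ((⋃₀ D)ᶜ.indicator 1)
    (measurable_one.indicator hDm.compl).aestronglyMeasurable
  have hind : ∀ᵐ y ∂ν, ind y = (⋃₀ D)ᶜ.indicator 1 y := AEEqFun.coeFn_mk _ _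
  let s : Fin n → L0 ν := fun i => ind * AEEqFun.const Y (r i)
  have hs : ∀ᵐ y ∂ν, ∀ i, s i y = (⋃₀ D)ᶜ.indicator 1 y * r i := by
    refine ae_all_iff.2 fun i => ?_
    filter_upwards [hind, AEEqFun.coeFn_mul ind (AEEqFun.const Y (r i)),
      AEEqFun.coeFn_const (μ := ν) Y (r i)] with y h1 h2 h3
    rw [h2, Pi.mul_apply, h1, h3, Function.const_apply]
  let L : (Fin n → L0 ν) →ₗ[L0 ν] (M × (Fin n → L0 ν)) × L0 ν :=
    ((Fintype.linearCombination (L0 ν) v).prod LinearMap.id).prod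
      (Fintype.linearCombination (L0 ν) s)
  obtain ⟨F, hF1, hF2⟩ := exists_dominated_extension ν p hadd hsmul (LinearMap.range L) (by
    rintro _ ⟨a, rfl⟩
    change ∑ i, a i * s i ≤ p (∑ i, a i • v i, a)
    rw [← AEEqFun.coeFn_le]
    filter_upwards [hs, sum_mul_ae ν Finset.univ a s, hD _ ⟨a, rfl⟩,
      hp_nonneg (∑ i, a i • v i, a)] with y h1 h2 h3 h4
    rw [h2]
    simp only [h1]
    by_cases hy : y ∈ ⋃₀ D
    · simpa [hy] using h4
    · have : y ∉ E a := fun h => hy (h3 h)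
      simp only [E, Set.mem_ofPred_eq, not_lt] at this
      simpa [hy, mul_comm] using this)
  refine ⟨F ∘ₗ LinearMap.inl _ _ _, fun w => ?_, fun ω' hω' => ?_⟩
  · refine (hF1 (w, 0)).trans (le_of_eq ?_)
    simp [p, abs_zero_L0]
  · have hB : ∀ᵐ x ∂μ, (∀ i, |ω' (pb (v i)) x - r i| ≤ δ) → φ x ∉ ⋃₀ D := by
      have : ∀ d ∈ D, ∀ᵐ x ∂μ, (∀ i, |ω' (pb (v i)) x - r i| ≤ δ) → φ x ∉ d := by
        intro d hd
        obtain ⟨a, rfl⟩ := hDE hd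
        have e : ω' (pb (∑ i, a i • v i)) = ∑ i, pullL0 hφ (a i) * ω' (pb (v i)) := by
          simp only [hpb.map_sum, hpb.smul, _root_.map_sum, map_smul, smul_eq_mul]
        have h0 := abs_le_ae μ (hω' (pb (∑ i, a i • v i)))
        rw [e] at h0
        filter_upwards [h0, sum_mul_ae μ Finset.univ (fun i => pullL0 hφ (a i))
          fun i => ω' (pb (v i)), ae_all_iff.2 fun i => pullL0_ae hφ (a i),
          hpb.pnorm_ae (∑ i, a i • v i), hφ.ae (hp (∑ i, a i • v i, a))]
          with x h1 h2 h3 h4 h5 hx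
        simp only [E, Set.mem_ofPred_eq, not_lt, h5]
        rw [h2, h4] at h1
        simp only [h3] at h1
        have h6 : ∑ i, r i * a i (φ x) ≤
            ∑ i, (a i (φ x) * ω' (pb (v i)) x + δ * |a i (φ x)|) := by
          refine Finset.sum_le_sum fun i _ => ?_
          have : (r i - ω' (pb (v i)) x) * a i (φ x) ≤ δ * |a i (φ x)| := by
            refine (le_abs_self _).trans ?_
            rw [abs_mul, abs_sub_comm]
            exact mul_le_mul_of_nonneg_right (hx i) (abs_nonneg _)
          linarith
        rw [Finset.sum_add_distrib, ← Finset.mul_sum] at h6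
        linarith [(le_abs_self _).trans h1]
      filter_upwards [(ae_ball_iff hDc).2 this] with x hx h1 ⟨d, hd, hxd⟩
      exact hx d hd h1 hxd
    have hω : ∀ᵐ y ∂ν, ∀ i, y ∉ ⋃₀ D → |F (v i, 0) y - r i| ≤ δ := by
      refine ae_all_iff.2 fun i => ?_
      have h1 : F (v i, Pi.single i 1) = s i := by
        have := hF2 _ ⟨Pi.single i 1, rfl⟩
        simpa [L] using this
      have h2 : F (v i, 0) = s i - F (0, Pi.single i 1) := by
        rw [← h1, ← map_sub]; simp
      rw [h2]
      have hsingle : ∀ᵐ y ∂ν, ∀ j, (Pi.single i 1 : Fin n → L0 ν) j y = if j = i then 1 else 0 := by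
        refine ae_all_iff.2 fun j => ?_
        by_cases hj : j = i
        · subst hj
          filter_upwards [AEEqFun.coeFn_one (α := Y) (μ := ν) (β := ℝ)] with y h
          simp [h]
        · filter_upwards [AEEqFun.coeFn_zero (α := Y) (μ := ν) (β := ℝ)] with y h
          simp [hj, h]
      have h3 := pn_zero ν (M := M)
      filter_upwards [hs, AEEqFun.coeFn_sub (s i) (F (0, Pi.single i 1)),
        abs_le_ae ν (hF1 (0, Pi.single i 1)), hp (0, Pi.single i 1), hsingle,
        AEEqFun.coeFn_zero (α := Y) (μ := ν) (β := ℝ)] with y k1 k2 k3 k4 k5 k6 hy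
      rw [k4] at k3
      simp only [k5, h3, k6] at k3
      rw [k2, Pi.sub_apply, k1, abs_sub_comm]
      simp only [apply_ite abs, abs_one, abs_zero, Finset.sum_ite_eq', Finset.mem_univ, if_true,
        Pi.zero_apply, zero_add, mul_one] at k3
      simpa [hy] using k3
    filter_upwards [hB, hφ.ae hω] with x h1 h2 hx i
    exact h2 i (h1 hx)

end Transfer

/-! ### Convergence in Banach `L⁰`-modules -/

theorem dL0_zero_eq (μ : Measure X) [SFinite μ] (f : L0 μ) :
    dL0 μ f 0 = ∫ x, min |f x| 1 ∂(μ.toFinite) := by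
  refine integral_congr_ae ?_
  rw [EventuallyEq, ae_toFinite]
  filter_upwards [AEEqFun.coeFn_zero (α := X) (μ := μ) (β := ℝ)] with x h
  simp [h]

theorem measurable_min_abs {μ : Measure X} (f : L0 μ) : Measurable fun x => min |f x| (1 : ℝ) :=
  f.measurable.abs.min measurable_const

theorem tendsto_dL0_of_ae (μ : Measure X) [SFinite μ] {ι : Type*} {l : Filter ι}
    [l.IsCountablyGenerated] (f : ι → L0 μ)
    (h : ∀ᵐ x ∂μ, Tendsto (fun i => f i x) l (nhds 0)) :
    Tendsto (fun i => dL0 μ (f i) 0) l (nhds 0) := by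
  simp only [dL0_zero_eq]
  have := tendsto_integral_filter_of_dominated_convergence (μ := μ.toFinite) (l := l)
    (F := fun i x => min |f i x| 1) (f := fun _ => (0 : ℝ)) (fun _ => (1 : ℝ))
    (Eventually.of_forall fun i => (measurable_min_abs (f i)).aestronglyMeasurable)
    (Eventually.of_forall fun i => Eventually.of_forall fun x => by
      rw [Real.norm_of_nonneg (by positivity)]
      exact min_le_right _ _)
    (integrable_const _) (by
      rw [ae_toFinite]
      filter_upwards [h] with x hx
      have := (hx.abs).min (tendsto_const_nhds (x := (1 : ℝ)))
      simpa using this)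
  simpa using this

/-- Fast convergence in `L⁰` implies a.e. convergence. -/
theorem ae_tendsto_of_dL0_lt (μ : Measure X) [SFinite μ] (f : ℕ → L0 μ)
    (h : ∀ n, dL0 μ (f n) 0 < (1 / 2) ^ n) :
    ∀ᵐ x ∂μ, Tendsto (fun n => f n x) atTop (nhds 0) := by
  have hmin_int (n : ℕ) : Integrable (fun x => min |f n x| 1) μ.toFinite :=
    Integrable.of_bound (measurable_min_abs (f n)).aestronglyMeasurable 1
      (Eventually.of_forall fun x => by
        rw [Real.norm_of_nonneg (by positivity)]
        exact min_le_right _ _)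
  have h1 (n : ℕ) : ∫⁻ x, ENNReal.ofReal (min |f n x| 1) ∂μ.toFinite ≤
      ENNReal.ofReal ((1 / 2) ^ n) := by
    rw [← ofReal_integral_eq_lintegral_ofReal (hmin_int n)
      (Eventually.of_forall fun x => by positivity), ← dL0_zero_eq]
    exact ENNReal.ofReal_le_ofReal (h n).le
  have h2 : ∫⁻ x, ∑' n, ENNReal.ofReal (min |f n x| 1) ∂μ.toFinite ≠ ⊤ := by
    rw [lintegral_tsum fun n => (measurable_min_abs (f n)).ennreal_ofReal.aemeasurable]
    refine ne_top_of_le_ne_top ?_ (ENNReal.tsum_le_tsum h1)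
    rw [← ENNReal.ofReal_tsum_of_nonneg (fun n => by positivity)
      (summable_geometric_of_lt_one (by norm_num) (by norm_num))]
    exact ENNReal.ofReal_ne_top
  have h3 := ae_lt_top (Measurable.tsum fun n =>
    (measurable_min_abs (f n)).ennreal_ofReal) h2
  rw [ae_toFinite] at h3
  filter_upwards [h3] with x hx
  have h4 := ENNReal.tendsto_atTop_zero_of_tsum_ne_top hx.ne
  have h5 : Tendsto (fun n => min |f n x| 1) atTop (nhds 0) := by
    have := (ENNReal.tendsto_toReal ENNReal.zero_ne_top).comp h4
    refine this.congr fun n => ?_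
    simp only [Function.comp]
    exact ENNReal.toReal_ofReal (by positivity)
  rw [tendsto_zero_iff_abs_tendsto_zero]
  refine h5.congr' ?_
  filter_upwards [h5.eventually_lt_const one_pos] with n hn
  rcases min_lt_iff.1 hn with h | h
  · exact min_eq_left h.le
  · exact absurd h (lt_irrefl _)

section Conv

variable (μ : Measure X) [SFinite μ] {M : Type*} [AddCommGroup M] [Module (L0 μ) M]
  [BanachMod μ M]

/-- A.e. convergence `|uₙ - v| → 0` in a Banach `L⁰`-module. -/
def AETendsto (u : ℕ → M) (v : M) : Prop :=
  ∀ᵐ x ∂μ, Tendsto (fun n => pn μ (u n - v) x) atTop (nhds 0)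

variable {μ}

theorem AETendsto.of_dM_lt {u : ℕ → M} {v : M} (h : ∀ n, dM μ (u n) v < (1 / 2) ^ n) :
    AETendsto μ u v :=
  ae_tendsto_of_dL0_lt μ _ h

theorem AETendsto.exists_dM_lt {u : ℕ → M} {v : M} (h : AETendsto μ u v) {ε : ℝ} (hε : 0 < ε) :
    ∃ n, dM μ (u n) v < ε :=
  ((tendsto_dL0_of_ae μ _ h).eventually_lt_const hε).exists

/-- Squeeze principle: it suffices to bound `|uₙ - v|` by something tending to `0`. -/
theorem AETendsto.of_le {u : ℕ → M} {v : M} (b : ℕ → X → ℝ)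
    (hle : ∀ n, ∀ᵐ x ∂μ, pn μ (u n - v) x ≤ b n x)
    (hb : ∀ᵐ x ∂μ, Tendsto (fun n => b n x) atTop (nhds 0)) : AETendsto μ u v := by
  filter_upwards [ae_all_iff.2 hle, hb, ae_all_iff.2 fun n => pn_nonneg_ae μ (u n - v)]
    with x h1 h2 h3
  exact squeeze_zero h3 h1 h2

theorem AETendsto.const (v : M) : AETendsto μ (fun _ => v) v := by
  refine .of_le (fun _ _ => 0) (fun _ => ?_) (by simp)
  rw [sub_self, pn_zero]
  filter_upwards [AEEqFun.coeFn_zero (α := X) (μ := μ) (β := ℝ)] with x h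
  simp [h]

theorem AETendsto.add {u u' : ℕ → M} {v v' : M} (h : AETendsto μ u v) (h' : AETendsto μ u' v') :
    AETendsto μ (fun n => u n + u' n) (v + v') := by
  refine .of_le (fun n x => pn μ (u n - v) x + pn μ (u' n - v') x) (fun n => ?_) ?_
  · rw [add_sub_add_comm]
    exact pn_add_ae μ _ _
  · filter_upwards [h, h'] with x h1 h2
    simpa using h1.add h2

theorem AETendsto.smul {u : ℕ → M} {v : M} (h : AETendsto μ u v) (f : L0 μ) :
    AETendsto μ (fun n => f • u n) (f • v) := by
  refine .of_le (fun n x => |f x| * pn μ (u n - v) x) (fun n => ?_) ?_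
  · rw [← smul_sub]
    filter_upwards [pn_smul_ae μ f (u n - v)] with x hx using hx.le
  · filter_upwards [h] with x h1
    simpa using h1.const_mul |f x|

theorem AETendsto.pn {u : ℕ → M} {v : M} (h : AETendsto μ u v) :
    ∀ᵐ x ∂μ, Tendsto (fun n => pn μ (u n) x) atTop (nhds (pn μ v x)) := by
  have h1 (n : ℕ) : ∀ᵐ x ∂μ, |Paper.pn μ (u n) x - Paper.pn μ v x| ≤ Paper.pn μ (u n - v) x := by
    have h2 := pn_add_ae μ (u n - v) v
    have h3 := pn_add_ae μ (v - u n) (u n)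
    rw [sub_add_cancel] at h2 h3
    rw [pn_sub_comm] at h3
    filter_upwards [h2, h3] with x h2 h3
    rw [abs_le]
    constructor <;> linarith
  filter_upwards [h, ae_all_iff.2 h1] with x h2 h3
  rw [tendsto_iff_dist_tendsto_zero]
  exact squeeze_zero (fun _ => dist_nonneg) h3 h2

theorem exists_aetendsto_of_cauchy {u : ℕ → M}
    (h : ∀ᵐ x ∂μ, Tendsto (fun i : ℕ × ℕ => pn μ (u i.1 - u i.2) x) (atTop ×ˢ atTop) (nhds 0)) :
    ∃ v, AETendsto μ u v := by
  have h1 := tendsto_dL0_of_ae μ (fun i : ℕ × ℕ => pn μ (u i.1 - u i.2)) h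
  obtain ⟨v, hv⟩ := BanachMod.complete (μ := μ) u fun ε hε => by
    have h2 := h1.eventually_lt_const hε
    rw [prod_atTop_atTop_eq] at h2
    obtain ⟨⟨a, b⟩, hab⟩ := eventually_atTop.1 h2
    exact ⟨max a b, fun m hm n hn => hab (m, n)
      ⟨(le_max_left _ _).trans hm, (le_max_right _ _).trans hn⟩⟩
  have h3 (k : ℕ) : ∃ m ≥ k, dM μ (u m) v < (1 / 2) ^ k :=
    ((eventually_ge_atTop k).and (hv.eventually_lt_const (by positivity))).exists
  choose m hmk hm using h3
  have h4 : AETendsto μ (fun k => u (m k)) v := .of_dM_lt hm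
  have h5 : Tendsto (fun n => (n, m n)) atTop (atTop ×ˢ atTop) :=
    tendsto_id.prodMk (tendsto_atTop_mono hmk tendsto_id)
  refine ⟨v, .of_le (fun n x => pn μ (u n - u (m n)) x + pn μ (u (m n) - v) x)
    (fun n => pn_sub_le_ae μ _ _ _) ?_⟩
  filter_upwards [h, h4] with x h6 h7
  simpa using (h6.comp h5).add h7

end Conv

/-! ### The injective norm and its behaviour under pullback -/

section Eps

variable (μ : Measure X) {M N : Type*} [AddCommGroup M] [Module (L0 μ) M]
  [AddCommGroup N] [Module (L0 μ) N]

/-- The functional `ω ⊗ η` on the algebraic tensor product. -/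
def tensorFun (ω : M →ₗ[L0 μ] L0 μ) (η : N →ₗ[L0 μ] L0 μ) : M ⊗[L0 μ] N →ₗ[L0 μ] L0 μ :=
  TensorProduct.lift ((LinearMap.mul (L0 μ) (L0 μ)).compl₁₂ ω η)

@[simp]
theorem tensorFun_tmul (ω : M →ₗ[L0 μ] L0 μ) (η : N →ₗ[L0 μ] L0 μ) (v : M) (w : N) :
    tensorFun μ ω η (v ⊗ₜ w) = ω v * η w := rfl

theorem mem_epsReps [SFinite μ] [BanachMod μ M] [BanachMod μ N] (α : M ⊗[L0 μ] N) (g : L0 μ) :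
    g ∈ epsReps μ α ↔ ∃ (ω : M →ₗ[L0 μ] L0 μ) (η : N →ₗ[L0 μ] L0 μ),
      InDualDisc μ ω ∧ InDualDisc μ η ∧ g = |tensorFun μ ω η α| := by
  constructor
  · rintro ⟨n, v, w, ω, η, hω, hη, rfl, rfl⟩
    exact ⟨ω, η, hω, hη, by simp⟩
  · rintro ⟨ω, η, hω, hη, rfl⟩
    obtain ⟨n, v, w, rfl⟩ := TensorProduct.exists_sum_tmul_eq α
    exact ⟨n, v, w, ω, η, hω, hη, rfl, by simp⟩

theorem epsReps_nonempty [SFinite μ] [BanachMod μ M] [BanachMod μ N] (α : M ⊗[L0 μ] N) :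
    (epsReps μ α).Nonempty := by
  refine ⟨_, (mem_epsReps μ α _).2 ⟨0, 0, fun v => ?_, fun v => ?_, rfl⟩⟩ <;>
  · rw [LinearMap.zero_apply, abs_zero_L0]
    exact BanachMod.pn_nonneg v

theorem pn_tmul_le_ae [SFinite μ] [BanachMod μ M] [BanachMod μ N] {P : Type*} [AddCommGroup P]
    [Module (L0 μ) P] [BanachMod μ P] {e : M ⊗[L0 μ] N →ₗ[L0 μ] P} (he : IsEpsTensor μ M N P e)
    (v : M) (w : N) : ∀ᵐ x ∂μ, pn μ (e (v ⊗ₜ w)) x ≤ pn μ v x * pn μ w x := by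
  have h : pn μ (e (v ⊗ₜ w)) ≤ pn μ v * pn μ w := by
    refine (he.pn_emb _).2 fun g hg => ?_
    obtain ⟨ω, η, hω, hη, rfl⟩ := (mem_epsReps μ _ _).1 hg
    apply abs_le_of_ae
    rw [tensorFun_tmul]
    filter_upwards [AEEqFun.coeFn_mul (ω v) (η w), AEEqFun.coeFn_mul (pn μ v) (pn μ w),
      abs_le_ae μ (hω v), abs_le_ae μ (hη w)] with x h1 h2 h3 h4
    rw [h1, h2, Pi.mul_apply, Pi.mul_apply, abs_mul]
    exact mul_le_mul h3 h4 (abs_nonneg _) ((abs_nonneg _).trans h3)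
  filter_upwards [AEEqFun.coeFn_le.2 h, AEEqFun.coeFn_mul (pn μ v) (pn μ w)] with x h1 h2
  rwa [h2] at h1

end Eps

/-- Elementary estimate comparing two sums of products with entrywise close factors. -/
theorem abs_sum_mul_le {n : ℕ} (s t s' t' : Fin n → ℝ) (δ : ℝ)
    (hs : ∀ i, |s i - s' i| ≤ δ) (ht : ∀ i, |t i - t' i| ≤ δ) :
    |∑ i, s i * t i| ≤ |∑ i, s' i * t' i| + δ * ∑ i, (|s i| + |t i| + δ) := by
  have h : |∑ i, s i * t i - ∑ i, s' i * t' i| ≤ δ * ∑ i, (|s i| + |t i| + δ) := by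
    rw [← Finset.sum_sub_distrib, Finset.mul_sum]
    refine (Finset.abs_sum_le_sum_abs _ _).trans (Finset.sum_le_sum fun i _ => ?_)
    have hδ : 0 ≤ δ := (abs_nonneg _).trans (hs i)
    have e : s i * t i - s' i * t' i =
        s i * (t i - t' i) + (s i - s' i) * t i - (s i - s' i) * (t i - t' i) := by ring
    rw [e]
    have h1 := abs_sub (s i * (t i - t' i) + (s i - s' i) * t i) ((s i - s' i) * (t i - t' i))
    have h2 := abs_add_le (s i * (t i - t' i)) ((s i - s' i) * t i)
    rw [abs_mul, abs_mul] at h2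
    rw [abs_mul (s i - s' i) (t i - t' i)] at h1
    have h3 := mul_le_mul_of_nonneg_left (ht i) (abs_nonneg (s i))
    have h4 := mul_le_mul_of_nonneg_right (hs i) (abs_nonneg (t i))
    have h5 := mul_le_mul (hs i) (ht i) (abs_nonneg _) hδ
    linarith
  have := abs_sub_abs_le_abs_sub (∑ i, s i * t i) (∑ i, s' i * t' i)
  linarith

section Isometry

variable {Y : Type*} [MeasurableSpace Y] {μ : Measure X} [SFinite μ] {ν : Measure Y} [SFinite ν]
  {φ : X → Y} {hφ : Measure.QuasiMeasurePreserving φ μ ν}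
  {M : Type*} [AddCommGroup M] [Module (L0 ν) M] [BanachMod ν M]
  {N : Type*} [AddCommGroup N] [Module (L0 ν) N] [BanachMod ν N]
  {Mp : Type*} [AddCommGroup Mp] [Module (L0 μ) Mp] [BanachMod μ Mp]
  {Np : Type*} [AddCommGroup Np] [Module (L0 μ) Np] [BanachMod μ Np]
  {pbM : M → Mp} {pbN : N → Np}

/-- The map `v ⊗ w ↦ φ*v ⊗ φ*w` between the algebraic tensor products over the rings `L⁰(𝕐)`
and `L⁰(𝕏)`. -/
def tensorPull (hpbM : IsPullback μ ν φ hφ M Mp pbM) (hpbN : IsPullback μ ν φ hφ N Np pbN) :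
    M ⊗[L0 ν] N →+ Mp ⊗[L0 μ] Np :=
  TensorProduct.liftAddHom
    (AddMonoidHom.mk' (fun v => AddMonoidHom.mk' (fun w => pbM v ⊗ₜ[L0 μ] pbN w)
      fun w w' => by rw [hpbN.add, TensorProduct.tmul_add])
      fun v v' => by
        ext w
        simp [hpbM.add, TensorProduct.add_tmul])
    fun f v w => by
      simp [hpbM.smul, hpbN.smul, TensorProduct.smul_tmul']

variable (hpbM : IsPullback μ ν φ hφ M Mp pbM) (hpbN : IsPullback μ ν φ hφ N Np pbN)

@[simp]
theorem tensorPull_tmul (v : M) (w : N) :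
    tensorPull hpbM hpbN (v ⊗ₜ w) = pbM v ⊗ₜ pbN w := rfl

theorem tensorPull_smul (f : L0 ν) (α : M ⊗[L0 ν] N) :
    tensorPull hpbM hpbN (f • α) = pullL0 hφ f • tensorPull hpbM hpbN α := by
  induction α with
  | zero => simp
  | tmul v w => rw [TensorProduct.smul_tmul', tensorPull_tmul, tensorPull_tmul, hpbM.smul,
      TensorProduct.smul_tmul']
  | add a b ha hb => rw [smul_add, map_add, map_add, smul_add, ha, hb]

/-- The estimate `|φ*α|_ε ≤ |α|_ε ∘ φ`, tested against a pair of functionals: where both are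
close to rational constants, they may be replaced by functionals on `ℳ` and `𝒩`. -/
theorem tensorFun_tensorPull_le (ω' : Mp →ₗ[L0 μ] L0 μ) (η' : Np →ₗ[L0 μ] L0 μ)
    (hω' : InDualDisc μ ω') (hη' : InDualDisc μ η') (α : M ⊗[L0 ν] N) (g : L0 ν)
    (hg : g ∈ upperBounds (epsReps ν α)) :
    |tensorFun μ ω' η' (tensorPull hpbM hpbN α)| ≤ pullL0 hφ g := by
  obtain ⟨n, v, w, rfl⟩ := TensorProduct.exists_sum_tmul_eq α
  have key : ∀ᵐ x ∂μ, ∀ (k : ℕ) (r t : Fin n → ℚ),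
      (∀ i, |ω' (pbM (v i)) x - r i| ≤ 1 / ((k : ℝ) + 1)) →
      (∀ i, |η' (pbN (w i)) x - t i| ≤ 1 / ((k : ℝ) + 1)) →
      |∑ i, ω' (pbM (v i)) x * η' (pbN (w i)) x| ≤ g (φ x) +
        (2 * (1 / ((k : ℝ) + 1))) * ∑ i, (|ω' (pbM (v i)) x| + |η' (pbN (w i)) x| +
          2 * (1 / ((k : ℝ) + 1))) := by
    refine ae_all_iff.2 fun k => ae_all_iff.2 fun r => ae_all_iff.2 fun t => ?_
    have hδ : (0 : ℝ) ≤ 1 / ((k : ℝ) + 1) := by positivity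
    obtain ⟨ω, hω, h1⟩ := exists_descent_functional hpbM v (fun i => (r i : ℝ)) _ hδ
    obtain ⟨η, hη, h2⟩ := exists_descent_functional hpbN w (fun i => (t i : ℝ)) _ hδ
    have h3 : |∑ i, ω (v i) * η (w i)| ≤ g :=
      hg ⟨n, v, w, ω, η, hω, hη, rfl, rfl⟩
    filter_upwards [h1 ω' hω', h2 η' hη', hφ.ae (abs_le_ae ν h3),
      hφ.ae (sum_mul_ae ν Finset.univ (fun i => ω (v i)) fun i => η (w i))]
      with x k1 k2 k3 k4 hr ht
    rw [k4] at k3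
    refine (abs_sum_mul_le _ _ (fun i => ω (v i) (φ x)) (fun i => η (w i) (φ x)) _
      (fun i => ?_) (fun i => ?_)).trans (by gcongr)
    · have := k1 hr i
      rw [abs_sub_comm] at this
      refine (abs_sub_le _ (r i : ℝ) _).trans ?_
      linarith [hr i]
    · have := k2 ht i
      rw [abs_sub_comm] at this
      refine (abs_sub_le _ (t i : ℝ) _).trans ?_
      linarith [ht i]
  apply abs_le_of_ae
  have e : tensorFun μ ω' η' (tensorPull hpbM hpbN (∑ i, v i ⊗ₜ w i)) =
      ∑ i, ω' (pbM (v i)) * η' (pbN (w i)) := by simp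
  rw [e]
  filter_upwards [key, sum_mul_ae μ Finset.univ (fun i => ω' (pbM (v i))) fun i => η' (pbN (w i)),
    pullL0_ae hφ g] with x h1 h2 h3
  rw [h2, h3]
  have hrat (a : ℝ) (k : ℕ) : ∃ q : ℚ, |a - q| ≤ 1 / ((k : ℝ) + 1) := by
    obtain ⟨q, hq⟩ := exists_rat_near a (ε := 1 / ((k : ℝ) + 1)) (by positivity)
    exact ⟨q, hq.le⟩
  have h4 (k : ℕ) : |∑ i, ω' (pbM (v i)) x * η' (pbN (w i)) x| ≤ g (φ x) +
        (2 * (1 / ((k : ℝ) + 1))) * ∑ i, (|ω' (pbM (v i)) x| + |η' (pbN (w i)) x| +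
          2 * (1 / ((k : ℝ) + 1))) := by
    choose r hr using fun i => hrat (ω' (pbM (v i)) x) k
    choose t ht using fun i => hrat (η' (pbN (w i)) x) k
    exact h1 k r t hr ht
  have hlim := tendsto_one_div_add_atTop_nhds_zero_nat (𝕜 := ℝ)
  have h5 : Tendsto (fun k : ℕ => g (φ x) +
        (2 * (1 / ((k : ℝ) + 1))) * ∑ i, (|ω' (pbM (v i)) x| + |η' (pbN (w i)) x| +
          2 * (1 / ((k : ℝ) + 1)))) atTop (nhds (g (φ x) +
        (2 * 0) * ∑ i, (|ω' (pbM (v i)) x| + |η' (pbN (w i)) x| + 2 * 0))) :=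
    tendsto_const_nhds.add ((hlim.const_mul 2).mul
      (tendsto_finsetSum _ fun i _ => tendsto_const_nhds.add (hlim.const_mul 2)))
  simpa using ge_of_tendsto' h5 h4

variable {P : Type*} [AddCommGroup P] [Module (L0 ν) P] [BanachMod ν P]
  {eP : M ⊗[L0 ν] N →ₗ[L0 ν] P}
  {Q : Type*} [AddCommGroup Q] [Module (L0 μ) Q] [BanachMod μ Q]
  {eQ : Mp ⊗[L0 μ] Np →ₗ[L0 μ] Q}

/-- The identity `|φ*α|_ε = |α|_ε ∘ φ` on the algebraic tensor product. -/
theorem pn_tensorPull (hP : IsEpsTensor ν M N P eP) (hQ : IsEpsTensor μ Mp Np Q eQ)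
    (α : M ⊗[L0 ν] N) :
    pn μ (eQ (tensorPull hpbM hpbN α)) = pullL0 hφ (pn ν (eP α)) := by
  apply le_antisymm
  · refine (hQ.pn_emb _).2 fun g hg => ?_
    obtain ⟨ω', η', hω', hη', rfl⟩ := (mem_epsReps μ _ _).1 hg
    exact tensorFun_tensorPull_le hpbM hpbN ω' η' hω' hη' α _ (hP.pn_emb α).1
  · refine pullL0_le_of_isLUB hφ (hP.pn_emb α) (epsReps_nonempty ν α) fun g hg => ?_
    obtain ⟨ω, η, hω, hη, rfl⟩ := (mem_epsReps ν _ _).1 hg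
    obtain ⟨ω', hω', h1⟩ := exists_pull_functional hpbM ω hω
    obtain ⟨η', hη', h2⟩ := exists_pull_functional hpbN η hη
    refine (hQ.pn_emb _).1 ((mem_epsReps μ _ _).2 ⟨ω', η', hω', hη', ?_⟩)
    rw [pullL0_abs]
    congr 1
    clear hg
    induction α with
    | zero => simp [pullL0_zero]
    | tmul v w => simp [pullL0_mul, h1, h2]
    | add a b ha hb => rw [map_add, map_add, map_add, pullL0_add, ha, hb]

/-! ### Extension to the completed tensor products -/

/-- The graph of `φ*` on `ℳ ⊗̂_ε 𝒩`: `p` and `q` are limits of `αₙ` and `φ*αₙ` for a common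
sequence `αₙ` in the algebraic tensor product. -/
def LimRel (eP : M ⊗[L0 ν] N →ₗ[L0 ν] P) (eQ : Mp ⊗[L0 μ] Np →ₗ[L0 μ] Q) (p : P) (q : Q) : Prop :=
  ∃ α : ℕ → M ⊗[L0 ν] N, AETendsto ν (fun n => eP (α n)) p ∧
    AETendsto μ (fun n => eQ (tensorPull hpbM hpbN (α n))) q

variable {hpbM hpbN}

theorem LimRel.add {p p' : P} {q q' : Q} (h : LimRel hpbM hpbN eP eQ p q)
    (h' : LimRel hpbM hpbN eP eQ p' q') : LimRel hpbM hpbN eP eQ (p + p') (q + q') := by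
  obtain ⟨α, h1, h2⟩ := h
  obtain ⟨β, h3, h4⟩ := h'
  exact ⟨fun n => α n + β n, by simpa using h1.add h3, by simpa using h2.add h4⟩

theorem LimRel.smul {p : P} {q : Q} (h : LimRel hpbM hpbN eP eQ p q) (f : L0 ν) :
    LimRel hpbM hpbN eP eQ (f • p) (pullL0 hφ f • q) := by
  obtain ⟨α, h1, h2⟩ := h
  exact ⟨fun n => f • α n, by simpa using h1.smul f,
    by simpa [tensorPull_smul] using h2.smul (pullL0 hφ f)⟩

theorem LimRel.emb (α : M ⊗[L0 ν] N) :
    LimRel hpbM hpbN eP eQ (eP α) (eQ (tensorPull hpbM hpbN α)) :=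
  ⟨fun _ => α, .const _, .const _⟩

theorem LimRel.pn (hP : IsEpsTensor ν M N P eP) (hQ : IsEpsTensor μ Mp Np Q eQ) {p : P} {q : Q}
    (h : LimRel hpbM hpbN eP eQ p q) : pn μ q = pullL0 hφ (pn ν p) := by
  obtain ⟨α, h1, h2⟩ := h
  have h3 (n : ℕ) : ∀ᵐ x ∂μ, Paper.pn μ (eQ (tensorPull hpbM hpbN (α n))) x =
      Paper.pn ν (eP (α n)) (φ x) := by
    rw [pn_tensorPull hpbM hpbN hP hQ]
    exact pullL0_ae hφ _
  apply AEEqFun.ext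
  filter_upwards [hφ.ae h1.pn, h2.pn, ae_all_iff.2 h3, pullL0_ae hφ (Paper.pn ν p)]
    with x k1 k2 k3 k4
  rw [k4]
  exact tendsto_nhds_unique (k2.congr k3) k1

theorem LimRel.unique (hP : IsEpsTensor ν M N P eP) (hQ : IsEpsTensor μ Mp Np Q eQ) {p : P}
    {q q' : Q} (h : LimRel hpbM hpbN eP eQ p q) (h' : LimRel hpbM hpbN eP eQ p q') : q = q' := by
  have h1 := h.add (h'.smul (-1))
  have e : pullL0 hφ (-1 : L0 ν) = -1 := by
    apply AEEqFun.ext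
    filter_upwards [pullL0_ae hφ (-1 : L0 ν), hφ.ae (AEEqFun.coeFn_neg (1 : L0 ν)),
      hφ.ae (AEEqFun.coeFn_one (α := Y) (μ := ν) (β := ℝ)), AEEqFun.coeFn_neg (1 : L0 μ),
      AEEqFun.coeFn_one (α := X) (μ := μ) (β := ℝ)] with x k1 k2 k3 k4 k5
    simp [k1, k2, k3, k4, k5]
  rw [e, neg_one_smul, neg_one_smul, add_neg_cancel] at h1
  have h2 := h1.pn hP hQ
  rw [pn_zero, pullL0_zero] at h2
  exact add_neg_eq_zero.1 ((BanachMod.pn_eq_zero (μ := μ) _).1 h2)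

theorem exists_limRel (hP : IsEpsTensor ν M N P eP) (hQ : IsEpsTensor μ Mp Np Q eQ) (p : P) :
    ∃ q, LimRel hpbM hpbN eP eQ p q := by
  choose α hα using fun n : ℕ => hP.dense p ((1 / 2) ^ n) (by positivity)
  have h1 : AETendsto ν (fun n => eP (α n)) p := .of_dM_lt hα
  have h2 : ∀ᵐ y ∂ν, Tendsto (fun i : ℕ × ℕ => pn ν (eP (α i.1) - eP (α i.2)) y)
      (atTop ×ˢ atTop) (nhds 0) := by
    filter_upwards [h1, ae_all_iff.2 fun i : ℕ × ℕ =>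
      pn_sub_le_ae ν (eP (α i.1)) p (eP (α i.2)), ae_all_iff.2 fun i : ℕ × ℕ =>
      pn_nonneg_ae ν (eP (α i.1) - eP (α i.2))] with y k1 k2 k3
    refine squeeze_zero k3 k2 ?_
    have := (k1.comp (tendsto_fst (f := atTop) (g := (atTop : Filter ℕ)))).add
      (k1.comp (tendsto_snd (f := (atTop : Filter ℕ)) (g := atTop)))
    simpa [Function.comp_def, pn_sub_comm ν p] using this
  obtain ⟨q, hq⟩ := exists_aetendsto_of_cauchy (μ := μ)
    (u := fun n => eQ (tensorPull hpbM hpbN (α n))) (by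
      have e (i : ℕ × ℕ) : ∀ᵐ x ∂μ,
          pn ν (eP (α i.1) - eP (α i.2)) (φ x) =
          pn μ (eQ (tensorPull hpbM hpbN (α i.1)) - eQ (tensorPull hpbM hpbN (α i.2))) x := by
        rw [← map_sub, ← map_sub, ← map_sub, pn_tensorPull hpbM hpbN hP hQ]
        filter_upwards [pullL0_ae hφ (pn ν (eP (α i.1 - α i.2)))] with x hx using hx.symm
      filter_upwards [ae_all_iff.2 e, hφ.ae h2] with x k1 k2
      exact k2.congr k1)
  exact ⟨q, α, h1, hq⟩

/-- Elementary tensors in `(φ*ℳ) ⊗̂_ε (φ*𝒩)` are limits of `L⁰(𝕏)`-combinations of tensors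
`φ*v ⊗ φ*w`. -/
theorem exists_aetendsto_tmul (hpbM : IsPullback μ ν φ hφ M Mp pbM)
    (hpbN : IsPullback μ ν φ hφ N Np pbN) (hQ : IsEpsTensor μ Mp Np Q eQ)
    (S : Submodule (L0 μ) Q) (hS : ∀ v w, eQ (pbM v ⊗ₜ pbN w) ∈ S) (v : Mp) (w : Np) :
    ∃ u : ℕ → Q, (∀ n, u n ∈ S) ∧ AETendsto μ u (eQ (v ⊗ₜ w)) := by
  have hS1 (v' : Mp) (hv' : v' ∈ Submodule.span (L0 μ) (Set.range pbM)) (w : N) :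
      eQ (v' ⊗ₜ pbN w) ∈ S := by
    have : Submodule.span (L0 μ) (Set.range pbM) ≤
        S.comap (eQ ∘ₗ (TensorProduct.mk (L0 μ) Mp Np).flip (pbN w)) := by
      rw [Submodule.span_le]
      rintro _ ⟨v, rfl⟩
      exact hS v w
    exact this hv'
  have hS2 (v' : Mp) (hv' : v' ∈ Submodule.span (L0 μ) (Set.range pbM)) (w' : Np)
      (hw' : w' ∈ Submodule.span (L0 μ) (Set.range pbN)) : eQ (v' ⊗ₜ w') ∈ S := by
    have : Submodule.span (L0 μ) (Set.range pbN) ≤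
        S.comap (eQ ∘ₗ TensorProduct.mk (L0 μ) Mp Np v') := by
      rw [Submodule.span_le]
      rintro _ ⟨w, rfl⟩
      exact hS1 v' hv' w
    exact this hw'
  choose a haS ha using fun n : ℕ => hpbM.dense v ((1 / 2) ^ n) (by positivity)
  choose b hbS hb using fun n : ℕ => hpbN.dense w ((1 / 2) ^ n) (by positivity)
  have ha' : AETendsto μ a v := .of_dM_lt ha
  have hb' : AETendsto μ b w := .of_dM_lt hb
  refine ⟨fun n => eQ (a n ⊗ₜ b n), fun n => hS2 _ (haS n) _ (hbS n), .of_le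
    (fun n x => pn μ (a n - v) x * pn μ (b n) x + pn μ v x * pn μ (b n - w) x) (fun n => ?_) ?_⟩
  · have e : eQ (a n ⊗ₜ b n) - eQ (v ⊗ₜ w) = eQ ((a n - v) ⊗ₜ b n) + eQ (v ⊗ₜ (b n - w)) := by
      rw [← map_sub, ← map_add, TensorProduct.sub_tmul, TensorProduct.tmul_sub]
      congr 1
      abel
    rw [e]
    filter_upwards [pn_add_ae μ (eQ ((a n - v) ⊗ₜ b n)) (eQ (v ⊗ₜ (b n - w))),
      pn_tmul_le_ae μ hQ (a n - v) (b n), pn_tmul_le_ae μ hQ v (b n - w)] with x k1 k2 k3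
    linarith
  · filter_upwards [ha', hb', hb'.pn] with x k1 k2 k3
    simpa using (k1.mul k3).add (k2.const_mul (pn μ v x))

theorem span_dense (hpbM : IsPullback μ ν φ hφ M Mp pbM)
    (hpbN : IsPullback μ ν φ hφ N Np pbN) (hQ : IsEpsTensor μ Mp Np Q eQ)
    (S : Submodule (L0 μ) Q) (hS : ∀ v w, eQ (pbM v ⊗ₜ pbN w) ∈ S) (u : Q) (ε : ℝ) (hε : 0 < ε) :
    ∃ w ∈ S, dM μ w u < ε := by
  have h1 (β : Mp ⊗[L0 μ] Np) : ∃ s : ℕ → Q, (∀ n, s n ∈ S) ∧ AETendsto μ s (eQ β) := by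
    induction β with
    | zero => exact ⟨fun _ => 0, fun _ => S.zero_mem, by simpa using AETendsto.const (μ := μ) (0 : Q)⟩
    | tmul v w => exact exists_aetendsto_tmul hpbM hpbN hQ S hS v w
    | add a b ha hb =>
      obtain ⟨s, hs, hs'⟩ := ha
      obtain ⟨t, ht, ht'⟩ := hb
      exact ⟨fun n => s n + t n, fun n => S.add_mem (hs n) (ht n), by simpa using hs'.add ht'⟩
  choose β hβ using fun n : ℕ => hQ.dense u ((1 / 2) ^ n) (by positivity)
  have h2 (n : ℕ) : ∃ w ∈ S, dM μ w (eQ (β n)) < (1 / 2) ^ n := by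
    obtain ⟨s, hs, hs'⟩ := h1 (β n)
    obtain ⟨m, hm⟩ := hs'.exists_dM_lt (ε := (1 / 2) ^ n) (by positivity)
    exact ⟨s m, hs m, hm⟩
  choose w hwS hw using h2
  have h3 : AETendsto μ w u := by
    refine .of_le (fun n x => pn μ (w n - eQ (β n)) x + pn μ (eQ (β n) - u) x)
      (fun n => pn_sub_le_ae μ _ _ _) ?_
    filter_upwards [ae_tendsto_of_dL0_lt μ _ hw, ae_tendsto_of_dL0_lt μ _ hβ] with x k1 k2
    simpa using k1.add k2
  obtain ⟨n, hn⟩ := h3.exists_dM_lt hε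
  exact ⟨w n, hwS n, hn⟩

/-- Any bounded additive map with the prescribed values on elementary tensors has its graph
contained in `LimRel`. -/
theorem limRel_of_hom (hP : IsEpsTensor ν M N P eP) (Φ : P → Q)
    (hadd : ∀ p q : P, Φ (p + q) = Φ p + Φ q)
    (hbd : ∃ g : L0 μ, 0 ≤ g ∧ ∀ p : P, pn μ (Φ p) ≤ g * pullL0 hφ (pn ν p))
    (htmul : ∀ (v : M) (w : N), Φ (eP (v ⊗ₜ[L0 ν] w)) = eQ (pbM v ⊗ₜ[L0 μ] pbN w)) (p : P) :
    LimRel hpbM hpbN eP eQ p (Φ p) := by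
  let Ψ : P →+ Q := AddMonoidHom.mk' Φ hadd
  have hΨ (α : M ⊗[L0 ν] N) : Ψ (eP α) = eQ (tensorPull hpbM hpbN α) := by
    induction α with
    | zero => simp
    | tmul v w => exact htmul v w
    | add a b ha hb => simp only [map_add, ha, hb]
  obtain ⟨g, -, hg⟩ := hbd
  choose α hα using fun n : ℕ => hP.dense p ((1 / 2) ^ n) (by positivity)
  have h1 : AETendsto ν (fun n => eP (α n)) p := .of_dM_lt hα
  refine ⟨α, h1, .of_le (fun n x => g x * pn ν (eP (α n) - p) (φ x)) (fun n => ?_) ?_⟩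
  · rw [← hΨ, show Φ p = Ψ p from rfl, ← map_sub]
    filter_upwards [AEEqFun.coeFn_le.2 (hg (eP (α n) - p)),
      AEEqFun.coeFn_mul g (pullL0 hφ (pn ν (eP (α n) - p))),
      pullL0_ae hφ (pn ν (eP (α n) - p))] with x k1 k2 k3
    rw [k2, Pi.mul_apply, k3] at k1
    exact k1
  · filter_upwards [hφ.ae h1] with x k1
    simpa using k1.const_mul (g x)

end Isometry

/-- Let `𝕏`, `𝕐` be separable σ-finite measure spaces and `φ : X → Y`
measurable with `φ_# 𝔪_X ≪ 𝔪_Y`. Let `ℳ`, `𝒩` be Banach `L⁰(𝕐)`-modules. Then there is a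
unique homomorphism `φ* : ℳ ⊗̂_ε 𝒩 → (φ*ℳ) ⊗̂_ε (φ*𝒩)` with
`φ*(v ⊗ w) = (φ*v) ⊗ (φ*w)`; it satisfies `|φ* α| = |α| ∘ φ` and its image generates the
target, so that the injective tensor product of the pullbacks, together with `φ*`, is a
realization of the pullback of the injective tensor product. Here `P` realizes the injective
tensor product of `ℳ` and `𝒩` over `𝕐`, while `Q` realizes that of the pullbacks `Mp`,
`Np` over `𝕏`. -/
theorem pullback_commutes_with_injective_tensor
    {Y : Type*} [MeasurableSpace Y] (μ : Measure X) [SigmaFinite μ]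
    (ν : Measure Y) [SigmaFinite ν] (hμsep : MeasSeparable μ) (hνsep : MeasSeparable ν)
    (φ : X → Y) (hφ : Measure.QuasiMeasurePreserving φ μ ν)
    (M : Type*) [AddCommGroup M] [Module (L0 ν) M] [BanachMod ν M]
    (N : Type*) [AddCommGroup N] [Module (L0 ν) N] [BanachMod ν N]
    (Mp : Type*) [AddCommGroup Mp] [Module (L0 μ) Mp] [BanachMod μ Mp]
    (Np : Type*) [AddCommGroup Np] [Module (L0 μ) Np] [BanachMod μ Np]
    (pbM : M → Mp) (hpbM : IsPullback μ ν φ hφ M Mp pbM)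
    (pbN : N → Np) (hpbN : IsPullback μ ν φ hφ N Np pbN)
    (P : Type*) [AddCommGroup P] [Module (L0 ν) P] [BanachMod ν P]
    (eP : M ⊗[L0 ν] N →ₗ[L0 ν] P) (hP : IsEpsTensor ν M N P eP)
    (Q : Type*) [AddCommGroup Q] [Module (L0 μ) Q] [BanachMod μ Q]
    (eQ : Mp ⊗[L0 μ] Np →ₗ[L0 μ] Q) (hQ : IsEpsTensor μ Mp Np Q eQ) :
    ∃ Φ : P → Q,
      ((∀ p q : P, Φ (p + q) = Φ p + Φ q)
        ∧ (∀ (f : L0 ν) (p : P), Φ (f • p) = pullL0 hφ f • Φ p)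
        ∧ (∃ g : L0 μ, 0 ≤ g ∧ ∀ p : P, pn μ (Φ p) ≤ g * pullL0 hφ (pn ν p))
        ∧ (∀ (v : M) (w : N), Φ (eP (v ⊗ₜ[L0 ν] w)) = eQ (pbM v ⊗ₜ[L0 μ] pbN w)))
      ∧ (∀ Φ' : P → Q,
          ((∀ p q : P, Φ' (p + q) = Φ' p + Φ' q)
            ∧ (∀ (f : L0 ν) (p : P), Φ' (f • p) = pullL0 hφ f • Φ' p)
            ∧ (∃ g : L0 μ, 0 ≤ g ∧ ∀ p : P, pn μ (Φ' p) ≤ g * pullL0 hφ (pn ν p))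
            ∧ (∀ (v : M) (w : N), Φ' (eP (v ⊗ₜ[L0 ν] w)) = eQ (pbM v ⊗ₜ[L0 μ] pbN w))) →
          Φ' = Φ)
      ∧ (∀ p : P, pn μ (Φ p) = pullL0 hφ (pn ν p))
      ∧ IsPullback μ ν φ hφ P Q Φ := by
  choose Φ hΦ using exists_limRel (hpbM := hpbM) (hpbN := hpbN) hP hQ
  have hadd (p q : P) : Φ (p + q) = Φ p + Φ q :=
    (hΦ _).unique hP hQ ((hΦ p).add (hΦ q))
  have hsmul (f : L0 ν) (p : P) : Φ (f • p) = pullL0 hφ f • Φ p :=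
    (hΦ _).unique hP hQ ((hΦ p).smul f)
  have hpn (p : P) : pn μ (Φ p) = pullL0 hφ (pn ν p) := (hΦ p).pn hP hQ
  have htmul (v : M) (w : N) : Φ (eP (v ⊗ₜ[L0 ν] w)) = eQ (pbM v ⊗ₜ[L0 μ] pbN w) :=
    (hΦ _).unique hP hQ (LimRel.emb (v ⊗ₜ w))
  refine ⟨Φ, ⟨hadd, hsmul, ⟨1, ?_, fun p => by rw [one_mul, hpn]⟩, htmul⟩, ?_, hpn,
    hadd, hsmul, hpn, ?_⟩
  · rw [← AEEqFun.coeFn_le]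
    filter_upwards [AEEqFun.coeFn_zero (α := X) (μ := μ) (β := ℝ),
      AEEqFun.coeFn_one (α := X) (μ := μ) (β := ℝ)] with x h0 h1
    simp [h0, h1]
  · rintro Φ' ⟨hadd', -, hbd', htmul'⟩
    funext p
    exact (limRel_of_hom hP Φ' hadd' hbd' htmul' p).unique hP hQ (hΦ p)
  · exact span_dense hpbM hpbN hQ _ fun v w =>
      Submodule.subset_span ⟨eP (v ⊗ₜ w), htmul v w⟩

end Paper
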